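/- arXiv:1310.5909 — 5 statements merged into one kernel-verified Lean document; each statement's English description precedes it below -/
import Mathlib

section
/- Let G be a finite group and x ∈ G. If the subgroup ⟨x, g⁻¹xg⟩ generated by x and its conjugate g⁻¹xg is nilpotent for every g ∈ G, then the normal closure of {x} in G is a nilpotent normal subgroup of G. -/
/-!
Let `D` be the conjugacy class of `x`, and consider the subgroups maximal among the nilpotent ones
generated by elements of `D`. Any two of these, `U` and `V`, coincide. Given a common subgroup `I`
generated by elements of `D` and proper in both, the normalizer condition yields `u ∈ D ∩ U` and
`v ∈ D ∩ V` outside `I` that normalize `I`. The group `J = I ⊔ ⟨u, v⟩` is nilpotent: since `J / I`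
is, `U ⊓ J` and `V ⊓ J` are subnormal in `J`, so they lie in its Fitting subgroup, and together
they generate `J`. A maximal `W` above `J` meets `U` and `V` in more than `I`, so `U = W = V` by
induction on `I`, going upwards. Hence a single such maximal subgroup contains all of `D`.
-/

namespace BaerSuzuki

open Subgroup

variable {G : Type*} [Group G]

section Nilpotent

theorem isNilpotent_of_injective {H : Type*} [Group H] [Group.IsNilpotent H] {f : G →* H}
    (hf : Function.Injective f) : Group.IsNilpotent G :=
  Subgroup.isNilpotent_of_ker_le_center f (((MonoidHom.ker_eq_bot_iff f).mpr hf).trans_le bot_le)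

theorem isNilpotent_of_le {H K : Subgroup G} (hHK : H ≤ K) [Group.IsNilpotent K] :
    Group.IsNilpotent H :=
  isNilpotent_of_injective (inclusion_injective hHK)

instance isNilpotent_subgroupOf (H K : Subgroup G) [Group.IsNilpotent H] :
    Group.IsNilpotent (H.subgroupOf K) :=
  isNilpotent_of_injective (f := K.subtype.subgroupComap H) fun _ _ hab =>
    Subtype.ext (Subtype.ext (congrArg (fun h : H => (h : G)) hab))

instance isNilpotent_map {H : Type*} [Group H] (f : G →* H) (K : Subgroup G)
    [Group.IsNilpotent K] : Group.IsNilpotent (K.map f) :=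
  Group.nilpotent_of_surjective _ (f.subgroupMap_surjective K)

theorem isNilpotent_quotient_of_sup_eq_top {N C : Subgroup G} [N.Normal] [Group.IsNilpotent C]
    (hNC : N ⊔ C = ⊤) : Group.IsNilpotent (G ⧸ N) := by
  have hmap : C.map (QuotientGroup.mk' N) = ⊤ := by
    rw [← map_top_of_surjective _ (QuotientGroup.mk'_surjective N), ← hNC,
      Subgroup.map_sup, QuotientGroup.map_mk'_self, bot_sup_eq]
  exact Group.isNilpotent_top.mp (hmap ▸ isNilpotent_map (QuotientGroup.mk' N) C)

theorem inf_normalizer_le_iff_eq {H K : Subgroup G} (hHK : H ≤ K) [Group.IsNilpotent K] :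
    K ⊓ normalizer (H : Set G) ≤ H ↔ H = K := by
  refine ⟨fun hle => hHK.antisymm (subgroupOf_eq_top.mp ?_), fun h => h ▸ inf_le_left⟩
  refine normalizerCondition_iff_only_full_group_self_normalizing.mp
    Group.normalizerCondition_of_isNilpotent _ (le_antisymm ?_ le_normalizer)
  rw [← subgroupOf_normalizer_eq hHK]
  exact fun k hk => hle ⟨k.2, hk⟩

end Nilpotent

section IteratedCommutator

/-- The left-normed commutator subgroup `[K, N, …, N]` with `n` entries `N`; it is
additive in a normal subgroup `K`, on which the proof of Fitting's theorem rests. -/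
def iteratedCommutator (K N : Subgroup G) (n : ℕ) : Subgroup G :=
  (fun L : Subgroup G => ⁅L, N⁆)^[n] K

theorem iteratedCommutator_mono {K L : Subgroup G} (hKL : K ≤ L) (N : Subgroup G) (n : ℕ) :
    iteratedCommutator K N n ≤ iteratedCommutator L N n :=
  Monotone.iterate (fun _ _ h => commutator_mono h le_rfl) n hKL

theorem iteratedCommutator_succ (K N : Subgroup G) (n : ℕ) :
    iteratedCommutator K N (n + 1) = iteratedCommutator ⁅K, N⁆ N n :=
  Function.iterate_succ_apply _ n K

theorem iteratedCommutator_bot (N : Subgroup G) (n : ℕ) : iteratedCommutator ⊥ N n = ⊥ :=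
  Function.iterate_fixed (commutator_bot_left N) n

theorem iteratedCommutator_self (N : Subgroup G) (n : ℕ) :
    iteratedCommutator N N n = N.lowerCentralSeries n := by
  induction n with
  | zero => rfl
  | succ n ih =>
    rw [Subgroup.lowerCentralSeries_succ, ← ih]
    exact Function.iterate_succ_apply' _ n N

theorem iteratedCommutator_succ_le_lowerCentralSeries (K N : Subgroup G) [N.Normal] (n : ℕ) :
    iteratedCommutator K N (n + 1) ≤ N.lowerCentralSeries n := by
  rw [iteratedCommutator_succ, ← iteratedCommutator_self]
  exact iteratedCommutator_mono (commutator_le_right K N) N n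

theorem commutator_sup_left (K L N : Subgroup G) [K.Normal] [L.Normal] [N.Normal] :
    ⁅K ⊔ L, N⁆ = ⁅K, N⁆ ⊔ ⁅L, N⁆ := by
  refine le_antisymm (commutator_le.mpr fun g hg n hn => ?_)
    (sup_le (commutator_mono le_sup_left le_rfl) (commutator_mono le_sup_right le_rfl))
  obtain ⟨k, hk, l, hl, rfl⟩ := mem_sup_of_normal_right.mp hg
  rw [commutatorElement_mul_left_eq_conj_mul]
  have hln := Normal.conj_mem inferInstance _ (commutator_mem_commutator hl hn) k
  exact mul_mem (mem_sup_right hln) (mem_sup_left (commutator_mem_commutator hk hn))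

theorem commutator_sup_right (K L N : Subgroup G) [K.Normal] [L.Normal] [N.Normal] :
    ⁅K, L ⊔ N⁆ = ⁅K, L⁆ ⊔ ⁅K, N⁆ := by
  rw [commutator_comm, commutator_sup_left, commutator_comm L, commutator_comm N]

theorem iteratedCommutator_sup_left (K L N : Subgroup G) [K.Normal] [L.Normal] [N.Normal]
    (n : ℕ) : iteratedCommutator (K ⊔ L) N n =
      iteratedCommutator K N n ⊔ iteratedCommutator L N n := by
  induction n generalizing K L with
  | zero => rfl
  | succ n ih => rw [iteratedCommutator_succ, commutator_sup_left, ih, ← iteratedCommutator_succ,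
      ← iteratedCommutator_succ]

theorem iteratedCommutator_sup_right_eq_bot {K M N : Subgroup G} [K.Normal] [M.Normal] [N.Normal]
    {i j : ℕ} (hM : iteratedCommutator K M i = ⊥) (hN : iteratedCommutator K N j = ⊥) :
    iteratedCommutator K (M ⊔ N) (i + j) = ⊥ := by
  induction i generalizing K j with
  | zero => rw [show K = ⊥ from hM, iteratedCommutator_bot]
  | succ i ihi =>
    induction j generalizing K with
    | zero => rw [show K = ⊥ from hN, iteratedCommutator_bot]
    | succ j ihj =>
      have hKM : iteratedCommutator ⁅K, M⁆ (M ⊔ N) (i + (j + 1)) = ⊥ :=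
        ihi (by rwa [← iteratedCommutator_succ])
          (le_bot_iff.mp (hN ▸ iteratedCommutator_mono (commutator_le_left K M) N _))
      have hKN : iteratedCommutator ⁅K, N⁆ (M ⊔ N) (i + 1 + j) = ⊥ :=
        ihj (le_bot_iff.mp (hM ▸ iteratedCommutator_mono (commutator_le_left K N) M _))
          (by rwa [← iteratedCommutator_succ])
      rw [← add_assoc, iteratedCommutator_succ, commutator_sup_right, iteratedCommutator_sup_left,
        hKN, sup_bot_eq, add_right_comm, add_assoc, hKM]

theorem isNilpotent_sup {M N : Subgroup G} [M.Normal] [N.Normal] [Group.IsNilpotent M]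
    [Group.IsNilpotent N] : Group.IsNilpotent (M ⊔ N : Subgroup G) := by
  obtain ⟨c, hc⟩ := (isNilpotent_iff_lowerCentralSeries M).mp inferInstance
  obtain ⟨d, hd⟩ := (isNilpotent_iff_lowerCentralSeries N).mp inferInstance
  refine (isNilpotent_iff_lowerCentralSeries _).mpr ⟨(c + 1) + (d + 1), ?_⟩
  rw [← iteratedCommutator_self]
  exact iteratedCommutator_sup_right_eq_bot
    (le_bot_iff.mp (hc ▸ iteratedCommutator_succ_le_lowerCentralSeries _ M c))
    (le_bot_iff.mp (hd ▸ iteratedCommutator_succ_le_lowerCentralSeries _ N d))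

end IteratedCommutator

section Fitting

variable (G) in
/-- The Fitting subgroup, encoded as the join of all nilpotent normal subgroups; without a chain
condition on `G` it need not be nilpotent itself. -/
def fittingSubgroup : Subgroup G :=
  sSup {N : Subgroup G | N.Normal ∧ Group.IsNilpotent N}

theorem le_fittingSubgroup (N : Subgroup G) [N.Normal] [Group.IsNilpotent N] :
    N ≤ fittingSubgroup G :=
  le_sSup ⟨inferInstance, inferInstance⟩

instance fittingSubgroup_characteristic : (fittingSubgroup G).Characteristic := by
  refine characteristic_iff_le_comap.mpr fun φ => sSup_le ?_
  rintro N ⟨hN, hNnil⟩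
  have := hN.map φ.toMonoidHom φ.surjective
  exact map_le_iff_le_comap.mp (le_fittingSubgroup (N.map φ.toMonoidHom))

theorem isNilpotent_fittingSubgroup [WellFoundedGT (Subgroup G)] :
    Group.IsNilpotent (fittingSubgroup G) := by
  have hne : {N : Subgroup G | N.Normal ∧ Group.IsNilpotent N}.Nonempty :=
    ⟨⊥, inferInstance, inferInstance⟩
  have hsup : SupClosed {N : Subgroup G | N.Normal ∧ Group.IsNilpotent N} := by
    rintro M ⟨_, _⟩ N ⟨_, _⟩
    exact ⟨inferInstance, isNilpotent_sup⟩
  exact (CompleteLattice.WellFoundedGT.isSupClosedCompact _ inferInstance _ hne hsup).2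

theorem normalizer_le_normalizer_map_subtype (H : Subgroup G) (C : Subgroup H)
    [C.Characteristic] : normalizer (H : Set G) ≤ normalizer (C.map H.subtype : Set G) := by
  rw [le_normalizer_iff]
  rintro g hg _ ⟨c, hc, rfl⟩
  exact ⟨H.normalizerMonoidHom ⟨g, hg⟩ c, characteristic_iff_le_comap.mp ‹_› _ hc, rfl⟩

instance wellFoundedGT_subgroup [WellFoundedGT (Subgroup G)] (H : Subgroup G) :
    WellFoundedGT (Subgroup H) :=
  (MapSubtype.orderIso H).strictMono.wellFoundedGT

instance wellFoundedGT_quotient [WellFoundedGT (Subgroup G)] (N : Subgroup G) [N.Normal] :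
    WellFoundedGT (Subgroup (G ⧸ N)) :=
  ((Subtype.strictMono_coe _).comp (QuotientGroup.comapMk'OrderIso N).strictMono).wellFoundedGT

theorem le_fittingSubgroup_of_isSubnormal [WellFoundedGT (Subgroup G)] {H : Subgroup G}
    (hH : H.IsSubnormal) [Group.IsNilpotent H] : H ≤ fittingSubgroup G := by
  suffices hN : ∀ N ≤ H, H ≤ normalizer (N : Set G) → Group.IsNilpotent N →
      N ≤ fittingSubgroup G from hN H le_rfl le_normalizer ‹_›
  induction hH with
  | top =>
    intro N _ hN _
    have := normalizer_eq_top_iff.mp (top_le_iff.mp hN)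
    exact le_fittingSubgroup N
  | step H K hHK _ hHnormal ih =>
    -- `N` moves up the series inside the Fitting subgroup of `H`, which is normal in `K`.
    intro N hNH hHN _
    have := isNilpotent_fittingSubgroup (G := H)
    have := (normal_subgroupOf_iff_le_normalizer hNH).mpr hHN
    calc N = (N.subgroupOf H).map H.subtype := (map_subgroupOf_eq_of_le hNH).symm
      _ ≤ (fittingSubgroup H).map H.subtype := map_mono (le_fittingSubgroup _)
      _ ≤ fittingSubgroup G :=
        ih _ ((map_subtype_le _).trans hHK)
          (((normal_subgroupOf_iff_le_normalizer hHK).mp hHnormal).trans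
            (normalizer_le_normalizer_map_subtype H _))
          inferInstance

theorem isSubnormal_of_normalizerCondition [WellFoundedGT (Subgroup G)]
    (hG : NormalizerCondition G) (H : Subgroup G) : H.IsSubnormal := by
  induction H using WellFoundedGT.induction with
  | ind H ih =>
  rcases eq_or_ne H ⊤ with rfl | hH
  · exact .top
  · exact .step _ _ le_normalizer (ih _ (hG H hH.lt_top)) inferInstance

theorem le_fittingSubgroup_of_isNilpotent_quotient [WellFoundedGT (Subgroup G)] {N A : Subgroup G}
    [N.Normal] [Group.IsNilpotent (G ⧸ N)] (hNA : N ≤ A) [Group.IsNilpotent A] :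
    A ≤ fittingSubgroup G := by
  have hcomap : (A.map (QuotientGroup.mk' N)).comap (QuotientGroup.mk' N) = A := by
    rw [QuotientGroup.comap_map_mk', sup_eq_right.mpr hNA]
  exact le_fittingSubgroup_of_isSubnormal (hcomap ▸ (isSubnormal_of_normalizerCondition
    Group.normalizerCondition_of_isNilpotent _).comap (QuotientGroup.mk' N))

theorem isNilpotent_of_sup_eq_top [WellFoundedGT (Subgroup G)] {N A B : Subgroup G} [N.Normal]
    [Group.IsNilpotent (G ⧸ N)] (hNA : N ≤ A) (hNB : N ≤ B) [Group.IsNilpotent A]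
    [Group.IsNilpotent B] (hAB : A ⊔ B = ⊤) : Group.IsNilpotent G := by
  have htop : fittingSubgroup G = ⊤ := top_le_iff.mp <| hAB ▸ sup_le
    (le_fittingSubgroup_of_isNilpotent_quotient hNA)
    (le_fittingSubgroup_of_isNilpotent_quotient hNB)
  exact Group.isNilpotent_top.mp (htop ▸ isNilpotent_fittingSubgroup)

theorem isNilpotent_sup_closure_pair [WellFoundedGT (Subgroup G)] {I U V : Subgroup G}
    [Group.IsNilpotent U] [Group.IsNilpotent V] (hIU : I ≤ U) (hIV : I ≤ V) {u v : G}
    (huU : u ∈ U) (hvV : v ∈ V) (hu : u ∈ normalizer (I : Set G))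
    (hv : v ∈ normalizer (I : Set G)) [Group.IsNilpotent (closure {u, v})] :
    Group.IsNilpotent (I ⊔ closure {u, v} : Subgroup G) := by
  set J := I ⊔ closure {u, v}
  have huJ : u ∈ J := mem_sup_right (subset_closure (by simp))
  have hvJ : v ∈ J := mem_sup_right (subset_closure (by simp))
  have : (I.subgroupOf J).Normal := normal_subgroupOf_of_le_normalizer <|
    sup_le le_normalizer ((closure_le _).mpr (Set.pair_subset hu hv))
  have : Group.IsNilpotent (J ⧸ I.subgroupOf J) :=
    isNilpotent_quotient_of_sup_eq_top (C := (closure {u, v}).subgroupOf J) <| by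
      rw [← subgroupOf_sup le_sup_left le_sup_right, subgroupOf_self]
  have hsup : U.subgroupOf J ⊔ V.subgroupOf J = ⊤ := by
    rw [← inf_subgroupOf_right U, ← inf_subgroupOf_right V,
      ← subgroupOf_sup inf_le_right inf_le_right, subgroupOf_eq_top]
    exact sup_le ((le_inf hIU le_sup_left).trans le_sup_left) <| (closure_le _).mpr <|
      Set.pair_subset (mem_sup_left ⟨huU, huJ⟩) (mem_sup_right ⟨hvV, hvJ⟩)
  exact isNilpotent_of_sup_eq_top (N := I.subgroupOf J) (A := U.subgroupOf J)
    (B := V.subgroupOf J) (comap_mono hIU) (comap_mono hIV) hsup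

end Fitting

section MaximalNilpotent

theorem normalizer_inf_normalizer_le_normalizer_inter (S T : Set G) :
    normalizer S ⊓ normalizer T ≤ normalizer (S ∩ T) :=
  fun _ hg a => and_congr (hg.1 a) (hg.2 a)

variable {D : Set G} {I U V : Subgroup G}

/-- `H` is generated by elements of `D`, equivalently by all elements of `D` that it contains; such
subgroups are the ones compared in the proof of the Baer–Suzuki theorem. -/
def IsGeneratedFrom (D : Set G) (H : Subgroup G) : Prop :=
  closure (D ∩ H) = H

/-- `U` is maximal among the nilpotent subgroups generated by elements of `D`, the subgroups
that the main argument shows to coincide; `U` need not be a maximal nilpotent subgroup of `G`. -/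
def IsMaximalNilpotentFrom (D : Set G) (U : Subgroup G) : Prop :=
  Maximal (fun H => IsGeneratedFrom D H ∧ Group.IsNilpotent H) U

theorem isGeneratedFrom_closure {S : Set G} (hS : S ⊆ D) : IsGeneratedFrom D (closure S) :=
  le_antisymm ((closure_le _).mpr Set.inter_subset_right)
    (closure_mono (Set.subset_inter hS subset_closure))

theorem IsGeneratedFrom.sup_closure (hI : IsGeneratedFrom D I) {S : Set G} (hS : S ⊆ D) :
    IsGeneratedFrom D (I ⊔ closure S) := by
  rw [← hI, ← Subgroup.closure_union]
  exact isGeneratedFrom_closure (Set.union_subset Set.inter_subset_left hS)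

theorem IsGeneratedFrom.exists_mem_normalizer_notMem (hD : D ⊆ normalizer D)
    (hI : IsGeneratedFrom D I) (hU : IsGeneratedFrom D U) [Group.IsNilpotent U] (hIU : I < U) :
    ∃ u ∈ D, u ∈ U ∧ u ∈ normalizer (I : Set G) ∧ u ∉ I := by
  by_contra! hmem
  set X := U ⊓ normalizer (I : Set G)
  have hIX : I ≤ X := le_inf hIU.le le_normalizer
  have hDX : D ∩ X = D ∩ I := Set.Subset.antisymm
    (fun u hu => ⟨hu.1, hmem u hu.1 hu.2.1 hu.2.2⟩) (Set.inter_subset_inter_right D hIX)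
  have hUD : U ≤ normalizer D :=
    hU.ge.trans ((closure_le _).mpr (Set.inter_subset_left.trans hD))
  have hXU : X = U := by
    refine (inf_normalizer_le_iff_eq inf_le_left).mp (le_inf inf_le_left ?_)
    calc U ⊓ normalizer (X : Set G) ≤ normalizer D ⊓ normalizer (X : Set G) :=
          inf_le_inf_right _ hUD
      _ ≤ normalizer (D ∩ X) := normalizer_inf_normalizer_le_normalizer_inter D X
      _ ≤ normalizer (closure (D ∩ X) : Set G) := normalizer_le_normalizer_closure _
      _ = normalizer (I : Set G) := by rw [hDX, hI]
  have hUI : U = I := by rw [← hU, ← hXU, hDX, hI]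
  exact hIU.ne' hUI

variable [WellFoundedGT (Subgroup G)]

theorem exists_ge_isMaximalNilpotentFrom (hI : IsGeneratedFrom D I) [hnil : Group.IsNilpotent I] :
    ∃ U, I ≤ U ∧ IsMaximalNilpotentFrom D U :=
  exists_maximal_ge_of_wellFoundedGT _ I ⟨hI, hnil⟩

theorem IsMaximalNilpotentFrom.eq_of_ge (hD : D ⊆ normalizer D)
    (hpair : ∀ a ∈ D, ∀ b ∈ D, Group.IsNilpotent (closure {a, b})) (hI : IsGeneratedFrom D I)
    (hU : IsMaximalNilpotentFrom D U) (hV : IsMaximalNilpotentFrom D V)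
    (hIU : I ≤ U) (hIV : I ≤ V) : U = V := by
  induction I using WellFoundedGT.induction generalizing U V with
  | ind I ih =>
  rcases hIU.eq_or_lt with rfl | hIU
  · exact hU.eq_of_le hV.prop hIV
  rcases hIV.eq_or_lt with rfl | hIV
  · exact (hV.eq_of_le hU.prop hIU.le).symm
  obtain ⟨hUgen, _⟩ := hU.prop
  obtain ⟨hVgen, _⟩ := hV.prop
  obtain ⟨u, huD, huU, huN, huI⟩ := hI.exists_mem_normalizer_notMem hD hUgen hIU
  obtain ⟨v, hvD, hvV, hvN, hvI⟩ := hI.exists_mem_normalizer_notMem hD hVgen hIV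
  have := hpair u huD v hvD
  have := isNilpotent_sup_closure_pair hIU.le hIV.le huU hvV huN hvN
  obtain ⟨W, hJW, hW⟩ := exists_ge_isMaximalNilpotentFrom
    (hI.sup_closure (Set.pair_subset huD hvD))
  have heq_of_mem : ∀ {d : G} {T : Subgroup G}, d ∈ D → d ∉ I → d ∈ W →
      IsMaximalNilpotentFrom D T → I ≤ T → d ∈ T → W = T := by
    intro d T hdD hdI hdW hT hIT hdT
    have hlt : I < I ⊔ closure {d} :=
      left_lt_sup.mpr fun hle => hdI (hle (mem_closure_singleton_self d))
    refine ih _ hlt (hI.sup_closure (Set.singleton_subset_iff.mpr hdD)) hW hT ?_ ?_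
    · exact sup_le (le_sup_left.trans hJW) ((closure_le _).mpr (Set.singleton_subset_iff.mpr hdW))
    · exact sup_le hIT ((closure_le _).mpr (Set.singleton_subset_iff.mpr hdT))
  have huW : u ∈ W := hJW (mem_sup_right (subset_closure (by simp)))
  have hvW : v ∈ W := hJW (mem_sup_right (subset_closure (by simp)))
  exact (heq_of_mem huD huI huW hU hIU.le huU).symm.trans (heq_of_mem hvD hvI hvW hV hIV.le hvV)

theorem isNilpotent_closure (hD : D ⊆ normalizer D)
    (hpair : ∀ a ∈ D, ∀ b ∈ D, Group.IsNilpotent (closure {a, b})) :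
    Group.IsNilpotent (closure D) := by
  have hbot : IsGeneratedFrom D ⊥ := closure_empty (G := G) ▸ isGeneratedFrom_closure D.empty_subset
  obtain ⟨U, -, hU⟩ := exists_ge_isMaximalNilpotentFrom hbot
  have hDU : D ⊆ U := by
    intro d hd
    have := hpair d hd d hd
    obtain ⟨V, hdV, hV⟩ := exists_ge_isMaximalNilpotentFrom
      (isGeneratedFrom_closure (Set.pair_subset hd hd))
    rw [hU.eq_of_ge hD hpair hbot hV bot_le bot_le]
    exact hdV (subset_closure (Set.mem_insert d _))
  have := hU.prop.2
  exact isNilpotent_of_le ((closure_le U).mpr hDU)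

end MaximalNilpotent

section Conjugates

theorem isNilpotent_closure_pair_of_isConj {x a b : G}
    (h : ∀ g : G, Group.IsNilpotent (closure {x, g⁻¹ * x * g})) (ha : IsConj x a)
    (hb : IsConj x b) : Group.IsNilpotent (closure {a, b}) := by
  obtain ⟨c, rfl⟩ := isConj_iff.mp ha
  obtain ⟨e, rfl⟩ := isConj_iff.mp hb
  have := h (e⁻¹ * c)
  have hconj : (closure {x, (e⁻¹ * c)⁻¹ * x * (e⁻¹ * c)}).map (MulAut.conj c).toMonoidHom =
      closure {c * x * c⁻¹, e * x * e⁻¹} := by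
    rw [MonoidHom.map_closure, Set.image_pair]
    simp [mul_assoc]
  exact hconj ▸ isNilpotent_map _ _

theorem normalizer_conjugatesOf (x : G) : normalizer (conjugatesOf x) = ⊤ :=
  top_le_iff.mp <| le_set_normalizer_iff.mpr fun g _ _ ha => ha.trans (isConj_iff.mpr ⟨g, rfl⟩)

end Conjugates

end BaerSuzuki

theorem statement_4_general {G : Type*} [Group G] [WellFoundedGT (Subgroup G)] (x : G)
    (h : ∀ g : G, Group.IsNilpotent ↥(Subgroup.closure {x, g⁻¹ * x * g})) :
    Group.IsNilpotent ↥(Subgroup.normalClosure {x}) ∧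
      (Subgroup.normalClosure {x}).Normal := by
  refine ⟨?_, inferInstance⟩
  rw [Subgroup.normalClosure, Group.conjugatesOfSet, Set.biUnion_singleton]
  exact BaerSuzuki.isNilpotent_closure (BaerSuzuki.normalizer_conjugatesOf x ▸ Set.subset_univ _)
    fun _ ha _ hb => BaerSuzuki.isNilpotent_closure_pair_of_isConj h ha hb

/-- **The Baer–Suzuki theorem.**
If `x` is an element of a finite group `G` such that `⟨x, g⁻¹xg⟩` is nilpotent for
every `g ∈ G`, then the normal closure of `x` in `G` is a nilpotent normal subgroup. -/
theorem statement_4 {G : Type*} [Group G] [Fintype G] (x : G)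
    (h : ∀ g : G, Group.IsNilpotent ↥(Subgroup.closure {x, g⁻¹ * x * g})) :
    Group.IsNilpotent ↥(Subgroup.normalClosure {x}) ∧
      (Subgroup.normalClosure {x}).Normal :=
  statement_4_general x h
end

section
/- Let p be a prime and k a field of characteristic different from p. Let P be a finite p-group and V a finite-dimensional k-vector space carrying an irreducible (simple) representation ρ of P such that the commutator subgroup ⁅P,P⁆ does not act trivially on V. Let x₁, …, x_s be elements generating P. Then there exists an index i such that p · dim_k C_V(x_i) ≤ dim_k V, where C_V(x) = {v ∈ V : ρ(x)v = v} is the fixed-point subspace of x. -/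
/-!
Index the lower central series by `γ₀ = P`, and let `m` be such that `ρ` is nontrivial on `γ_{m+1}`
but trivial on `γ_{m+2}`. Some `a ∈ γ_m` has `ρ a` not commuting with every `ρ g`, hence not with
`ρ x` for some generator `x`. Then `Z = ρ ⁅x, a⁆ ≠ 1` commutes with the whole image of `ρ`, and by
Schur's lemma the difference of two distinct powers of `Z` is injective. Since `ρ x` acts as `Z ^ j`
on the translate `(ρ a) ^ j C` of its fixed space `C`, these translates are independent for
`j < orderOf Z`, and `orderOf Z` is at least `p`.
-/

section LinearAlgebra

open Module LinearMap

theorem iSupIndep_ker_sub {R M ι : Type*} [Ring R] [AddCommGroup M] [Module R M]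
    {X : End R M} {A : ι → End R M} (hX : ∀ i, Commute X (A i))
    (hA : ∀ i j, Commute (A i) (A j))
    (hinj : Pairwise fun i j => Function.Injective (A i - A j)) :
    iSupIndep fun i => ker (X - A i) := by
  classical
  rw [iSupIndep_iff_finsetSum_eq_zero_imp_eq_zero]
  intro s
  induction s using Finset.induction_on with
  | empty => simp
  | insert a s ha ih =>
    intro v hv hsum
    have hXv : ∀ i ∈ insert a s, X (v i) = A i (v i) := fun i hi =>
      sub_eq_zero.mp (mem_ker.mp (hv i hi))
    -- Applying `X - A a` kills the term at `a` and turns the other terms into `(A i - A a) (v i)`.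
    have hdiff : ∀ i ∈ s, (A i - A a) (v i) = 0 := by
      refine ih (fun i => (A i - A a) (v i)) (fun i hi => ?_) ?_
      · have hcomm : Commute (X - A i) (A i - A a) :=
          ((hX i).sub_right (hX a)).sub_left ((hA i i).sub_right (hA i a))
        rw [mem_ker, ← End.mul_apply, hcomm.eq, End.mul_apply,
          mem_ker.mp (hv i (Finset.mem_insert_of_mem hi)), map_zero]
      · calc ∑ i ∈ s, (A i - A a) (v i)
            = ∑ i ∈ insert a s, (A i - A a) (v i) := by simp [Finset.sum_insert ha]
          _ = ∑ i ∈ insert a s, (X - A a) (v i) :=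
              Finset.sum_congr rfl fun i hi => by simp only [LinearMap.sub_apply, hXv i hi]
          _ = 0 := by rw [← map_sum, hsum, map_zero]
    have hs : ∀ i ∈ s, v i = 0 := fun i hi =>
      (map_eq_zero_iff _ (hinj (ne_of_mem_of_not_mem hi ha))).mp (hdiff i hi)
    have hva : v a = 0 := by
      rwa [Finset.sum_insert ha, Finset.sum_eq_zero hs, add_zero] at hsum
    exact (Finset.forall_mem_insert _ _ _).mpr ⟨hva, hs⟩

theorem sum_finrank_le_finrank_of_iSupIndep {K V ι : Type*} [DivisionRing K] [AddCommGroup V]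
    [Module K V] [FiniteDimensional K V] [Fintype ι] {W : ι → Submodule K V} (hW : iSupIndep W) :
    ∑ i, finrank K (W i) ≤ finrank K V := by
  classical
  rw [← finrank_directSum]
  exact finrank_le_finrank_of_injective (f := DirectSum.coeLinearMap W) hW.dfinsupp_lsum_injective

section Translates

variable {K V : Type*} [DivisionRing K] [AddCommGroup V] [Module K V] [FiniteDimensional K V]
  {X T Z : End K V}

theorem finrank_ker_sub_one_le_finrank_ker_sub_pow (hXT : X * T = Z * T * X) (hTZ : Commute T Z)
    (hT : Function.Injective T) (j : ℕ) :
    finrank K (ker (X - 1)) ≤ finrank K (ker (X - Z ^ j)) := by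
  have hXTj : X * T ^ j = Z ^ j * T ^ j * X := by
    have hsemi : SemiconjBy X T (Z * T) := hXT
    rw [← hTZ.symm.mul_pow]
    exact hsemi.pow_right j
  have hmaps : ∀ c ∈ ker (X - 1), (T ^ j) c ∈ ker (X - Z ^ j) := by
    intro c hc
    have hXc : X c = c := sub_eq_zero.mp (mem_ker.mp hc)
    have hXTc := LinearMap.congr_fun hXTj c
    simp only [End.mul_apply, hXc] at hXTc
    exact mem_ker.mpr (sub_eq_zero.mpr hXTc)
  have hTj : Function.Injective (T ^ j) := by
    rw [End.coe_pow]
    exact hT.iterate j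
  exact finrank_le_finrank_of_injective (f := (T ^ j).restrict hmaps) fun _ _ h =>
    Subtype.ext (hTj (congrArg Subtype.val h))

theorem mul_finrank_ker_sub_one_le (hXT : X * T = Z * T * X) (hXZ : Commute X Z)
    (hTZ : Commute T Z) (hT : Function.Injective T) {n : ℕ}
    (hZ : Pairwise fun i j : Fin n => Function.Injective (Z ^ (i : ℕ) - Z ^ (j : ℕ))) :
    n * finrank K (ker (X - 1)) ≤ finrank K V := by
  have hindep : iSupIndep fun i : Fin n => ker (X - Z ^ (i : ℕ)) :=
    iSupIndep_ker_sub (fun i => hXZ.pow_right i) (fun i j => Commute.pow_pow_self Z i j) hZ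
  calc n * finrank K (ker (X - 1))
      = ∑ _i : Fin n, finrank K (ker (X - 1)) := by simp
    _ ≤ ∑ i : Fin n, finrank K (ker (X - Z ^ (i : ℕ))) :=
        Finset.sum_le_sum fun i _ => finrank_ker_sub_one_le_finrank_ker_sub_pow hXT hTZ hT i
    _ ≤ finrank K V := sum_finrank_le_finrank_of_iSupIndep hindep

end Translates

end LinearAlgebra

section Commutators

open scoped commutatorElement

variable {G M : Type*} [Group G] [Monoid M] {φ : G →* M}

theorem map_commutatorElement_eq_one_iff_commute {a b : G} :
    φ ⁅a, b⁆ = 1 ↔ Commute (φ a) (φ b) := by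
  have hmul : φ a * φ b = φ ⁅a, b⁆ * (φ b * φ a) := by
    simp only [← map_mul, commutatorElement_def, mul_assoc, inv_mul_cancel_left, inv_mul_cancel,
      mul_one]
  have hunit : IsUnit (φ b * φ a) := by
    rw [← map_mul]
    exact (Group.isUnit (b * a)).map φ
  rw [commute_iff_eq, hmul, hunit.mul_eq_right]

theorem exists_mem_not_commute_map_of_closure_eq_top {S : Set G} (hS : Subgroup.closure S = ⊤)
    {a g : G} (hag : ¬ Commute (φ a) (φ g)) : ∃ x ∈ S, ¬ Commute (φ a) (φ x) := by
  by_contra! hcomm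
  have hle : Subgroup.closure S ≤ (Subgroup.centralizer {φ.toHomUnits a}).comap φ.toHomUnits := by
    rw [Subgroup.closure_le]
    exact fun x hx => Subgroup.mem_centralizer_singleton_iff.mpr (Units.ext (hcomm x hx).symm)
  have hg := Subgroup.mem_centralizer_singleton_iff.mp (hle (hS ▸ Subgroup.mem_top g))
  exact hag (congrArg Units.val hg).symm

theorem exists_lowerCentralSeries_succ_not_le_ker [Group.IsNilpotent G]
    (hφ : ¬ commutator G ≤ φ.ker) :
    ∃ m, ¬ (⊤ : Subgroup G).lowerCentralSeries (m + 1) ≤ φ.ker ∧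
      (⊤ : Subgroup G).lowerCentralSeries (m + 2) ≤ φ.ker := by
  obtain ⟨c, hc⟩ := Subgroup.nilpotent_iff_lowerCentralSeries.mp ‹Group.IsNilpotent G›
  by_contra! hstep
  have hnot_le : ∀ m, ¬ (⊤ : Subgroup G).lowerCentralSeries (m + 1) ≤ φ.ker := fun m => by
    induction m with
    | zero => rwa [zero_add, Subgroup.top_lowerCentralSeries_one]
    | succ m ih => exact hstep m ih
  exact hnot_le c ((Subgroup.lowerCentralSeries_antitone _ c.le_succ).trans (hc ▸ bot_le))

theorem exists_mem_map_commutatorElement_ne_one_central [Group.IsNilpotent G]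
    (hφ : ¬ commutator G ≤ φ.ker) {S : Set G} (hS : Subgroup.closure S = ⊤) :
    ∃ x ∈ S, ∃ a, φ ⁅x, a⁆ ≠ 1 ∧ ∀ g, Commute (φ ⁅x, a⁆) (φ g) := by
  obtain ⟨m, hnot_le, hle⟩ := exists_lowerCentralSeries_succ_not_le_ker hφ
  obtain ⟨a, ha, g, hag⟩ : ∃ a ∈ (⊤ : Subgroup G).lowerCentralSeries m, ∃ g, φ ⁅a, g⁆ ≠ 1 := by
    rw [Subgroup.lowerCentralSeries_succ, Subgroup.commutator_le] at hnot_le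
    simpa using hnot_le
  obtain ⟨x, hx, hax⟩ := exists_mem_not_commute_map_of_closure_eq_top hS
    (map_commutatorElement_eq_one_iff_commute.not.mp hag)
  have hxa : ⁅x, a⁆ ∈ (⊤ : Subgroup G).lowerCentralSeries (m + 1) := by
    rw [Subgroup.lowerCentralSeries_succ, Subgroup.commutator_comm]
    exact Subgroup.commutator_mem_commutator (Subgroup.mem_top x) ha
  refine ⟨x, hx, a, fun h => hax (map_commutatorElement_eq_one_iff_commute.mp h).symm, fun g => ?_⟩
  exact map_commutatorElement_eq_one_iff_commute.mp
    (hle (Subgroup.commutator_mem_commutator hxa (Subgroup.mem_top g)))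

theorem le_orderOf_map_of_isPGroup {p : ℕ} [Fact p.Prime] (hG : IsPGroup p G) {g : G}
    (hg : φ g ≠ 1) : p ≤ orderOf (φ g) := by
  obtain ⟨n, hn⟩ := hG.exists_orderOf_dvd_pow g
  obtain ⟨m, -, hm⟩ := (Nat.dvd_prime_pow Fact.out).mp ((orderOf_map_dvd φ g).trans hn)
  have hm0 : m ≠ 0 := by
    rintro rfl
    exact hg (orderOf_eq_one_iff.mp (hm.trans (pow_zero p)))
  exact hm ▸ Nat.le_pow (Nat.pos_of_ne_zero hm0)

end Commutators

section Representations

open scoped commutatorElement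

variable {k G V : Type*} [Field k] [Group G] [AddCommGroup V] [Module k V]
  {ρ : Representation k G V}

theorem isIrreducible_of_forall_invariant_eq_bot_or_eq_top [Nontrivial V]
    (hirr : ∀ U : Submodule k V, (∀ g : G, ∀ v ∈ U, ρ g v ∈ U) → U = ⊥ ∨ U = ⊤) :
    ρ.IsIrreducible where
  exists_pair_ne := ⟨⊥, ⊤, fun h => bot_ne_top (α := Submodule k V) (congrArg (·.toSubmodule) h)⟩
  eq_bot_or_eq_top U :=
    (hirr U.toSubmodule fun g _ hv => U.apply_mem_toSubmodule g hv).imp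
      (fun h => Subrepresentation.toSubmodule_injective h)
      (fun h => Subrepresentation.toSubmodule_injective h)

theorem injective_of_forall_commute [ρ.IsIrreducible] {A : Module.End k V}
    (hA : ∀ g, Commute A (ρ g)) (hA0 : A ≠ 0) : Function.Injective A := by
  let f : ρ.IntertwiningMap ρ := ⟨A, hA⟩
  exact (Representation.IsIrreducible.injective_or_eq_zero f).resolve_right fun hf =>
    hA0 (congrArg Representation.IntertwiningMap.toLinearMap hf)

theorem orderOf_map_commutatorElement_mul_finrank_le [FiniteDimensional k V] [ρ.IsIrreducible]
    {x a : G} (hcentral : ∀ g, Commute (ρ ⁅x, a⁆) (ρ g)) :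
    orderOf (ρ ⁅x, a⁆) * Module.finrank k (LinearMap.ker (ρ x - 1)) ≤ Module.finrank k V := by
  refine mul_finrank_ker_sub_one_le (T := ρ a) ?_ (hcentral x).symm (hcentral a).symm
    (ρ.apply_bijective a).injective fun i j hij => ?_
  · simp only [← map_mul, commutatorElement_def, inv_mul_cancel_right]
  · have hcommute : ∀ g, Commute (ρ ⁅x, a⁆ ^ (i : ℕ) - ρ ⁅x, a⁆ ^ (j : ℕ)) (ρ g) := fun g =>
      ((hcentral g).pow_left i).sub_left ((hcentral g).pow_left j)
    have hne : ρ ⁅x, a⁆ ^ (i : ℕ) ≠ ρ ⁅x, a⁆ ^ (j : ℕ) := fun h =>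
      hij (Fin.ext (pow_injOn_Iio_orderOf i.2 j.2 h))
    exact injective_of_forall_commute hcommute (sub_ne_zero.mpr hne)

end Representations

theorem statement_6_general {p : ℕ} [Fact p.Prime] {k : Type*} [Field k]
    {G : Type*} [Group G] [Group.IsNilpotent G] (hG : IsPGroup p G)
    {V : Type*} [AddCommGroup V] [Module k V] [FiniteDimensional k V]
    (ρ : Representation k G V) (hirr : ρ.IsIrreducible) (hcomm : ¬ commutator G ≤ ρ.ker)
    {ι : Type*} (x : ι → G) (hgen : Subgroup.closure (Set.range x) = ⊤) :
    ∃ i, p * Module.finrank k (LinearMap.ker (ρ (x i) - LinearMap.id)) ≤ Module.finrank k V := by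
  obtain ⟨_, ⟨i, rfl⟩, a, hne, hcentral⟩ :=
    exists_mem_map_commutatorElement_ne_one_central hcomm hgen
  exact ⟨i, (Nat.mul_le_mul_right _ (le_orderOf_map_of_isPGroup hG hne)).trans
    (orderOf_map_commutatorElement_mul_finrank_le hcentral)⟩

/-- **Fixed points of generators of a `p`-group in an irreducible representation.**
Let `P` be a finite `p`-group, `k` a field of characteristic different from `p`, and
`V` an irreducible `kP`-module on which `⁅P,P⁆` acts nontrivially. If `x₁, …, x_s`
generate `P`, then for some `i` we have `dim C_V(x_i) ≤ (1/p) · dim V`. -/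
theorem statement_6 {p : ℕ} [Fact p.Prime]
    {k : Type*} [Field k] (hchar : ringChar k ≠ p)
    {P : Type*} [Group P] [Fintype P] (hP : IsPGroup p P)
    {V : Type*} [AddCommGroup V] [Module k V] [FiniteDimensional k V]
    (ρ : Representation k P V)
    (hV : Nontrivial V)
    (hirr : ∀ U : Submodule k V, (∀ g : P, ∀ v ∈ U, ρ g v ∈ U) → U = ⊥ ∨ U = ⊤)
    (hcomm : ¬ ∀ z ∈ commutator P, ρ z = LinearMap.id)
    {s : ℕ} (x : Fin s → P)
    (hgen : Subgroup.closure (Set.range x) = ⊤) :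
    ∃ i : Fin s,
      p * Module.finrank k (LinearMap.ker (ρ (x i) - LinearMap.id)) ≤
        Module.finrank k V := by
  have := hP.isNilpotent
  exact statement_6_general hP ρ (isIrreducible_of_forall_invariant_eq_bot_or_eq_top hirr)
    hcomm x hgen
end

section
/- Let p be a prime and k a field of characteristic different from p. Let P be a finite p-group and V a finite-dimensional k-vector space carrying an irreducible (simple) representation ρ of P such that the commutator subgroup ⁅P,P⁆ does not act trivially on V. Let x₁, …, x_s be elements generating P, each of order exactly p, and assume that V is the internal direct sum of the subspaces [x_i, V] := range(ρ(x_i) − id_V), i.e. these subspaces are linearly independent and together span V. Then P has a section isomorphic to the wreath product Z_p ≀ Z_p. -/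
/-- Cyclic shift of coordinates by `k`, as a multiplicative automorphism of
the direct product of `p` copies of `ZMod p`. -/
def shiftAut (p : ℕ) (k : ZMod p) :
    (ZMod p → Multiplicative (ZMod p)) ≃* (ZMod p → Multiplicative (ZMod p)) where
  toFun f := fun i => f (i + k)
  invFun f := fun i => f (i - k)
  left_inv f := funext fun i => by
    show f (i - k + k) = f i
    rw [sub_add_cancel]
  right_inv f := funext fun i => by
    show f (i + k - k) = f i
    rw [add_sub_cancel_right]
  map_mul' f g := rfl

/-- The action of `ZMod p` on the direct product of `p` copies of `ZMod p`
by cyclically shifting the coordinates. -/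
def shiftHom (p : ℕ) :
    Multiplicative (ZMod p) →* MulAut (ZMod p → Multiplicative (ZMod p)) where
  toFun k := shiftAut p (Multiplicative.toAdd k)
  map_one' := by
    ext f i
    show f (i + 0) = f i
    rw [add_zero]
  map_mul' a b := by
    ext f i
    show f (i + (Multiplicative.toAdd a + Multiplicative.toAdd b))
        = f (i + Multiplicative.toAdd a + Multiplicative.toAdd b)
    rw [add_assoc]

/-- The wreath product `Z_p ≀ Z_p`: the semidirect product of the direct product of
`p` copies of the cyclic group of order `p` by the cyclic group of order `p`,
acting by cyclically shifting the coordinates. -/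
def WreathZpZp (p : ℕ) : Type :=
  (ZMod p → Multiplicative (ZMod p)) ⋊[shiftHom p] Multiplicative (ZMod p)

instance (p : ℕ) : Group (WreathZpZp p) :=
  inferInstanceAs (Group ((ZMod p → Multiplicative (ZMod p)) ⋊[shiftHom p] Multiplicative (ZMod p)))

/-- A group `P` has a section isomorphic to `Q` if some quotient of some subgroup of `P`
is isomorphic to `Q`; equivalently, there is a surjective homomorphism from a subgroup
of `P` onto `Q`. -/
def HasSectionIsomorphicTo (P : Type*) [Group P] (Q : Type*) [Group Q] : Prop :=
  ∃ (H : Subgroup P) (φ : H →* Q), Function.Surjective φ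

/-! Since the characteristic is not `p`, Maschke's theorem and extension of scalars reduce to an
irreducible representation over an algebraically closed field on which two of the `xᵢ` do not
commute; only the decomposition `V = ⨁ᵢ [xᵢ, V]` has to be carried along.

Choose `c` acting as a nonscalar such that `cᵖ` and all commutators `[c, g]` act as scalars. The
eigenspaces of `c` provide `p` blocks, which every `g` shifts by some `s(g)` in `ZMod p`, and some
`x = xⱼ` shifts them by 1. If `xᵢ` also shifts the blocks nontrivially, comparing dimensions in
`[xᵢ, V] ⊕ [x, V] ⊆ V` forces `p = 2`, and two noncommuting involutions of a 2-group always yield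
the dihedral group of order 8. Otherwise every other `xᵢ` preserves each block, `V` is the direct
sum of the block `V₀` and `[x, V]`, and projecting onto `V₀` along `[x, V]` shows that the
conjugates of the other `xᵢ` by the powers of `x` again decompose `V₀` into their commutator spaces.

If two of these conjugates do not commute on `V₀`, one argues by induction on the dimension. If all
of them commute, take `xᵢ` with a conjugate acting nontrivially on `V₀`: on its commutator space
the other conjugates of `xᵢ` act trivially, so `(xᵢ x)ᵖ` does not act as the identity. This is
exactly what is needed for the images of `x` and `xᵢ` to generate `Z_p ≀ Z_p`. -/

open Subgroup Representation
open scoped commutatorElement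

namespace HasSectionIsomorphicTo

variable {P P' Q : Type*} [Group P] [Group P'] [Group Q]

theorem of_injective (φ : Q →* P) (hφ : Function.Injective φ) : HasSectionIsomorphicTo P Q :=
  ⟨φ.range, (φ.ofInjective hφ).symm, (φ.ofInjective hφ).symm.surjective⟩

theorem of_surjective (f : P →* P') (hf : Function.Surjective f)
    (h : HasSectionIsomorphicTo P' Q) : HasSectionIsomorphicTo P Q := by
  obtain ⟨H, φ, hφ⟩ := h
  exact ⟨H.comap f, φ.comp (f.subgroupComap H),
    hφ.comp (f.subgroupComap_surjective_of_surjective H hf)⟩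

theorem of_subgroup {H : Subgroup P} (h : HasSectionIsomorphicTo H Q) :
    HasSectionIsomorphicTo P Q := by
  obtain ⟨K, φ, hφ⟩ := h
  let e := K.equivMapOfInjective H.subtype H.subtype_injective
  exact ⟨K.map H.subtype, φ.comp e.symm.toMonoidHom, hφ.comp e.symm.surjective⟩

end HasSectionIsomorphicTo

section PowersHom

variable {G : Type*} [Group G] {n : ℕ}

/-- The homomorphism from the cyclic group of order `n`, written as `Multiplicative (ZMod n)`, that
sends the generator to a given element `g` with `g ^ n = 1`. -/
def zmodPowersHom (g : G) (hg : g ^ n = 1) : Multiplicative (ZMod n) →* G :=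
  AddMonoidHom.toMultiplicativeLeft
    (ZMod.lift n ⟨zmultiplesHom (Additive G) (Additive.ofMul g), by
      simpa [zmultiplesHom] using congrArg Additive.ofMul hg⟩)

theorem zmodPowersHom_ofAdd_natCast (g : G) (hg : g ^ n = 1) (m : ℕ) :
    zmodPowersHom g hg (Multiplicative.ofAdd (m : ZMod n)) = g ^ m := by
  have := ZMod.lift_coe n ⟨zmultiplesHom (Additive G) (Additive.ofMul g), by
      simpa [zmultiplesHom] using congrArg Additive.ofMul hg⟩ (m : ℤ)
  simpa [zmodPowersHom] using congrArg Additive.toMul this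

theorem zmodPowersHom_ofAdd_one (g : G) (hg : g ^ n = 1) :
    zmodPowersHom g hg (Multiplicative.ofAdd 1) = g := by
  simpa using zmodPowersHom_ofAdd_natCast g hg 1

theorem exists_zmodPowersHom_eq_pow [NeZero n] (g : G) (hg : g ^ n = 1)
    (t : Multiplicative (ZMod n)) : ∃ m : ℕ, zmodPowersHom g hg t = g ^ m := by
  obtain ⟨m, hm⟩ := ZMod.natCast_zmod_surjective t.toAdd
  exact ⟨m, by rw [← zmodPowersHom_ofAdd_natCast g hg, hm, ofAdd_toAdd]⟩

theorem injective_zmodPowersHom_of_ne_one {p : ℕ} [Fact p.Prime] {g : G} (hg : g ^ p = 1)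
    (h : g ≠ 1) :
    Function.Injective (zmodPowersHom g hg) := by
  rw [injective_iff_map_eq_one]
  intro t ht
  obtain ⟨m, hm⟩ := ZMod.natCast_zmod_surjective t.toAdd
  rw [← ofAdd_toAdd t, ← hm, zmodPowersHom_ofAdd_natCast, ← orderOf_dvd_iff_pow_eq_one,
    orderOf_eq_prime hg h, ← ZMod.natCast_eq_zero_iff, hm] at ht
  exact ht

end PowersHom

theorem exists_mem_center_ne_one_of_normal {p : ℕ} [Fact p.Prime] {G : Type*} [Group G] [Finite G]
    (hG : IsPGroup p G) {N : Subgroup G} [N.Normal] (hN : N ≠ ⊥) :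
    ∃ z ∈ N, z ∈ center G ∧ z ≠ 1 := by
  have hcard : p ∣ Nat.card N :=
    (hG.to_subgroup N).card_eq_or_dvd.resolve_left (fun h => hN (N.card_eq_one.mp h))
  obtain ⟨z, hfix, hz⟩ :=
    (hG.of_equiv ConjAct.toConjAct).exists_fixed_point_of_prime_dvd_card_of_fixed_point N hcard
      (a := 1) (fun g => smul_one g)
  refine ⟨z, z.2, mem_center_iff.mpr fun g => ?_, fun h => hz (Subtype.ext h.symm)⟩
  have : g * z * g⁻¹ = z := congrArg Subtype.val (hfix (ConjAct.toConjAct g))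
  rwa [mul_inv_eq_iff_eq_mul] at this

section WreathCriterion

open SemidirectProduct Multiplicative

variable {p : ℕ}

theorem shiftHom_apply (k : Multiplicative (ZMod p)) (f : ZMod p → Multiplicative (ZMod p))
    (i : ZMod p) : shiftHom p k f i = f (i + k.toAdd) := rfl

namespace WreathZpZp

theorem eq_const_of_commute {F f : ZMod p → Multiplicative (ZMod p)} [NeZero p]
    (h : Commute (inl F) (inl f * inr (φ := shiftHom p) (ofAdd 1))) : F = fun _ => F 0 := by
  have hshift : ∀ i, F i = F (i + 1) := fun i => by
    have := congrFun (congrArg SemidirectProduct.left h.eq) i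
    simpa [mul_comm (F i), shiftHom_apply] using this
  funext i
  obtain ⟨m, rfl⟩ := ZMod.natCast_zmod_surjective i
  induction m with
  | zero => simp
  | succ m ih => rw [Nat.cast_succ, ← hshift, ih]

theorem exists_eq_inl_const_of_mem_center [Fact p.Prime]
    {z : (ZMod p → Multiplicative (ZMod p)) ⋊[shiftHom p] Multiplicative (ZMod p)}
    (hz : z ∈ center _) : ∃ c, z = inl fun _ => c := by
  rw [mem_center_iff] at hz
  have hright : z.right = 1 := by
    by_contra hne
    have := congrFun (congrArg SemidirectProduct.left (hz (inl (Pi.mulSingle 0 (ofAdd 1))))) 0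
    have hne' : z.right.toAdd ≠ 0 := hne
    simp [shiftHom_apply, hne'] at this
  have hinl : z = inl z.left := SemidirectProduct.ext rfl (by simpa using hright)
  refine ⟨z.left 0, hinl.trans (congrArg inl (eq_const_of_commute (f := 1) ?_))⟩
  rw [← hinl, map_one, one_mul]
  exact (hz _).symm

theorem exists_pow_eq_inl_const [Fact p.Prime] (f : ZMod p → Multiplicative (ZMod p)) :
    ∃ c, (inl f * inr (φ := shiftHom p) (ofAdd 1)) ^ p = inl fun _ => c := by
  set w := inl f * inr (φ := shiftHom p) (ofAdd 1)
  have hright : (w ^ p).right = 1 := by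
    change SemidirectProduct.rightHom (w ^ p) = 1
    rw [map_pow, ← ofAdd_toAdd (rightHom w), ← ofAdd_nsmul, nsmul_eq_mul, CharP.cast_eq_zero,
      zero_mul, ofAdd_zero]
  have hinl : w ^ p = inl (w ^ p).left := SemidirectProduct.ext rfl (by simpa using hright)
  exact ⟨_, hinl.trans (congrArg inl (eq_const_of_commute (hinl ▸ Commute.pow_self w p)))⟩

variable {P : Type*} [Group P]

-- A nontrivial kernel meets the center, which consists of the constant functions.
theorem injective_of_pow_ne_one [Fact p.Prime]
    (φ : (ZMod p → Multiplicative (ZMod p)) ⋊[shiftHom p] Multiplicative (ZMod p) →* P)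
    (f : ZMod p → Multiplicative (ZMod p)) (h : φ (inl f * inr (ofAdd 1)) ^ p ≠ 1) :
    Function.Injective φ := by
  rw [← MonoidHom.ker_eq_bot_iff]
  by_contra hker
  have hW : IsPGroup p
      ((ZMod p → Multiplicative (ZMod p)) ⋊[shiftHom p] Multiplicative (ZMod p)) :=
    IsPGroup.of_card (n := p + 1) (by simp [pow_succ])
  have : Finite ((ZMod p → Multiplicative (ZMod p)) ⋊[shiftHom p] Multiplicative (ZMod p)) :=
    .of_equiv _ equivProd.symm
  obtain ⟨z, hzker, hzcenter, hz⟩ := exists_mem_center_ne_one_of_normal hW hker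
  obtain ⟨c, rfl⟩ := exists_eq_inl_const_of_mem_center hzcenter
  have hc : c ≠ 1 := by rintro rfl; exact hz (map_one inl)
  obtain ⟨d, hd⟩ := exists_pow_eq_inl_const f
  obtain ⟨m, rfl⟩ : ∃ m : ℕ, c ^ m = d :=
    mem_powers_of_prime_card (p := p) (by simp) hc
  apply h
  rw [← map_pow, hd, show (fun _ => c ^ m : ZMod p → Multiplicative (ZMod p)) = (fun _ => c) ^ m
    from rfl, map_pow, map_pow, MonoidHom.mem_ker.mp hzker, one_pow]

end WreathZpZp

theorem commute_conj_zmodPowersHom {P : Type*} [Group P] {x y : P} [NeZero p] (hx : x ^ p = 1)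
    (hy : y ^ p = 1)
    (hcomm : ∀ n : ℕ, Commute y (x ^ n * y * (x ^ n)⁻¹)) (s t u v : Multiplicative (ZMod p)) :
    Commute (MulAut.conj (zmodPowersHom x hx s) (zmodPowersHom y hy u))
      (MulAut.conj (zmodPowersHom x hx t) (zmodPowersHom y hy v)) := by
  obtain ⟨k, hk⟩ := exists_zmodPowersHom_eq_pow y hy u
  obtain ⟨l, hl⟩ := exists_zmodPowersHom_eq_pow y hy v
  obtain ⟨n, hn⟩ := exists_zmodPowersHom_eq_pow x hx (s⁻¹ * t)
  rw [hk, hl, map_pow, map_pow]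
  refine Commute.pow_pow ?_ k l
  have := (hcomm n).map (MulAut.conj (zmodPowersHom x hx s))
  rwa [← MulAut.conj_apply, ← hn, ← MulAut.mul_apply, ← map_mul, ← map_mul, mul_inv_cancel_left]
    at this

theorem hasSectionIsomorphicTo_wreathZpZp [Fact p.Prime] {P : Type*} [Group P] {x y : P}
    (hx : x ^ p = 1) (hy : y ^ p = 1) (hcomm : ∀ n : ℕ, Commute y (x ^ n * y * (x ^ n)⁻¹))
    (hyx : (y * x) ^ p ≠ 1) : HasSectionIsomorphicTo P (WreathZpZp p) := by
  let X := zmodPowersHom x hx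
  let Y (i : ZMod p) : Multiplicative (ZMod p) →* P :=
    (MulAut.conj (X (ofAdd (-i)))).toMonoidHom.comp (zmodPowersHom y hy)
  let B := MonoidHom.noncommPiCoprod Y
    fun i j _ u v => commute_conj_zmodPowersHom hx hy hcomm (ofAdd (-i)) (ofAdd (-j)) u v
  have hB_single (i u) : B (Pi.mulSingle i u) = Y i u :=
    MonoidHom.noncommPiCoprod_mulSingle Y i u
  have hB (k : Multiplicative (ZMod p)) : B.comp (shiftHom p k).toMonoidHom =
      (MulAut.conj (X k)).toMonoidHom.comp B := by
    refine MonoidHom.pi_ext fun i u => ?_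
    have hsingle : shiftHom p k (Pi.mulSingle i u) = Pi.mulSingle (i - k.toAdd) u := by
      funext j
      simp [shiftHom_apply, Pi.mulSingle_apply, eq_sub_iff_add_eq]
    simp only [MonoidHom.comp_apply, MulEquiv.coe_toMonoidHom, hsingle, hB_single]
    simp only [Y, MonoidHom.comp_apply, MulEquiv.coe_toMonoidHom]
    rw [← MulAut.mul_apply, ← map_mul, ← map_mul, neg_sub, sub_eq_add_neg, ofAdd_add, ofAdd_toAdd]
  refine .of_injective (Q := WreathZpZp p) _ (WreathZpZp.injective_of_pow_ne_one
    (SemidirectProduct.lift B X hB) (Pi.mulSingle 0 (ofAdd 1)) ?_)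
  simpa [hB_single, X, Y, zmodPowersHom_ofAdd_one] using hyx

end WreathCriterion

theorem hasSectionIsomorphicTo_wreathZpZp_of_monoidHom {p : ℕ} [Fact p.Prime] {G M : Type*}
    [Group G] [Monoid M] (ρ : G →* M) {x y : G} (hx : x ^ p = 1) (hy : y ^ p = 1)
    (hcomm : ∀ n : ℕ, Commute (ρ y) (ρ (x ^ n * y * (x ^ n)⁻¹))) (hyx : ρ ((y * x) ^ p) ≠ 1) :
    HasSectionIsomorphicTo G (WreathZpZp p) := by
  let f := ρ.toHomUnits.rangeRestrict
  have hf : ∀ g h, f g = f h ↔ ρ g = ρ h := fun g h => by simp [f, Subtype.ext_iff, Units.ext_iff]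
  refine .of_surjective f ρ.toHomUnits.rangeRestrict_surjective
    (hasSectionIsomorphicTo_wreathZpZp (x := f x) (y := f y) ?_ ?_ (fun n => ?_) ?_)
  · rw [← map_pow, hx, map_one]
  · rw [← map_pow, hy, map_one]
  · rw [← map_pow, ← map_inv, ← map_mul, ← map_mul]
    simpa only [Commute, SemiconjBy, ← map_mul, hf] using hcomm n
  · rwa [← map_mul, ← map_pow, ← map_one f, Ne, hf, map_one]

theorem exists_pow_four_eq_one_of_not_commute {G : Type*} [Group G] (hG : IsPGroup 2 G) {a b : G}
    (ha : a ^ 2 = 1) (hb : b ^ 2 = 1) (hab : ¬ Commute a b) :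
    ∃ s : G, s ^ 2 ≠ 1 ∧ s ^ 4 = 1 ∧ a * s * a = s⁻¹ := by
  have haa : a⁻¹ = a := inv_eq_of_mul_eq_one_left (sq a ▸ ha)
  have hbb : b⁻¹ = b := inv_eq_of_mul_eq_one_left (sq b ▸ hb)
  obtain ⟨n, hn⟩ := IsPGroup.iff_orderOf.mp hG (a * b)
  have hn2 : 2 ≤ n := by
    by_contra! hlt
    have : (a * b) ^ 2 = 1 :=
      orderOf_dvd_iff_pow_eq_one.mp (hn ▸ pow_dvd_pow 2 (Nat.le_of_lt_succ hlt))
    rw [sq, mul_eq_one_iff_eq_inv, mul_inv_rev, haa, hbb] at this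
    exact hab this
  obtain ⟨m, rfl⟩ := Nat.exists_eq_add_of_le' hn2
  refine ⟨(a * b) ^ 2 ^ m, fun h => ?_, ?_, ?_⟩
  · have := orderOf_dvd_of_pow_eq_one ((pow_mul _ _ _).trans h)
    rw [hn, ← pow_succ, Nat.pow_dvd_pow_iff_le_right'] at this
    omega
  · rw [← pow_mul, show 2 ^ m * 4 = 2 ^ (m + 2) by ring, ← hn, pow_orderOf_eq_one]
  · calc a * (a * b) ^ 2 ^ m * a = (a * (a * b) * a⁻¹) ^ 2 ^ m := by rw [conj_pow, haa]
      _ = ((a * b) ^ 2 ^ m)⁻¹ := by rw [← inv_pow, mul_inv_rev, haa, hbb, ← mul_assoc, ← sq, ha,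
        one_mul]

-- With `s` of order 4 inverted by `a`, the involutions `a` and `a * s` generate a dihedral group
-- of order 8, which is `Z₂ ≀ Z₂`.
theorem hasSectionIsomorphicTo_wreathZpZp_two_of_not_commute {G : Type*} [Group G]
    (hG : IsPGroup 2 G) {a b : G} (ha : a ^ 2 = 1) (hb : b ^ 2 = 1) (hab : ¬ Commute a b) :
    HasSectionIsomorphicTo G (WreathZpZp 2) := by
  obtain ⟨s, hs2, hs4, hs⟩ := exists_pow_four_eq_one_of_not_commute hG ha hb hab
  have haa : a * a = 1 := sq a ▸ ha
  have hcancel (g : G) : a * (a * g) = g := by rw [← mul_assoc, haa, one_mul]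
  refine hasSectionIsomorphicTo_wreathZpZp ha (y := a * s) ?_ (fun n => ?_) ?_
  · rw [sq, ← mul_assoc, hs, inv_mul_cancel]
  · obtain ⟨k, rfl | rfl⟩ := n.even_or_odd'
    · simp [pow_mul, ha]
    · have hpow : a ^ (2 * k + 1) = a := by rw [pow_succ, pow_mul, ha, one_pow, one_mul]
      have hconj : a * (a * s) * a⁻¹ = s * a := by
        rw [hcancel, inv_eq_of_mul_eq_one_left haa]
      rw [hpow, hconj, commute_iff_eq]
      calc a * s * (s * a) = a * s * a * (a * s * a) := by simp only [mul_assoc, hcancel]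
        _ = (s * s)⁻¹ := by rw [hs, mul_inv_rev]
        _ = s * s := inv_eq_of_mul_eq_one_left (by rw [← hs4, ← sq, ← sq, ← pow_mul])
        _ = s * a * (a * s) := by simp only [mul_assoc, hcancel]
  · rwa [hs, inv_pow, Ne, inv_eq_one]

section Independence

variable {R M N ι κ : Type*} [Ring R] [AddCommGroup M] [Module R M] [AddCommGroup N] [Module R N]

theorem iSupIndep_map_of_disjoint_ker {f : M →ₗ[R] N} {p : ι → Submodule R M}
    (hp : iSupIndep p) (hf : Disjoint (⨆ i, p i) (LinearMap.ker f)) :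
    iSupIndep fun i => (p i).map f := by
  rw [iSupIndep_iff_finsetSum_eq_zero_imp_eq_zero] at hp ⊢
  intro s v hv hsum i hi
  choose! u hu huv using hv
  have hker : ∑ j ∈ s, u j = 0 := Submodule.disjoint_def.mp hf _
    (Submodule.sum_mem _ fun j hj => Submodule.mem_iSup_of_mem j (hu j hj))
    (by rw [LinearMap.mem_ker, map_sum, Finset.sum_congr rfl huv, hsum])
  rw [← huv i hi, hp s u hu hker i hi, map_zero]

theorem iSupIndep_of_map_le {f : M →ₗ[R] N} (hf : Function.Injective f) {p : ι → Submodule R M}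
    {q : ι → Submodule R N} (hq : iSupIndep q) (hpq : ∀ i, (p i).map f ≤ q i) : iSupIndep p := by
  rw [iSupIndep_iff_finsetSum_eq_zero_imp_eq_zero] at hq ⊢
  intro s v hv hsum i hi
  refine hf ((hq s (f ∘ v) (fun j hj => hpq j ⟨v j, hv j hj, rfl⟩) ?_ i hi).trans f.map_zero.symm)
  simp only [Function.comp_apply, ← map_sum, hsum, map_zero]

theorem iSupIndep_prod_of_le {α : Type*} [CompleteLattice α] [IsModularLattice α]
    {f : ι × κ → α} {g : ι → α} (hg : iSupIndep g) (hf : ∀ i, iSupIndep fun t => f (i, t))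
    (hfg : ∀ i t, f (i, t) ≤ g i) : iSupIndep f := by
  rintro ⟨i, t⟩
  have hrow : (⨆ s ≠ t, f (i, s)) ≤ g i := iSup₂_le fun s _ => hfg i s
  refine (((hf i) t).disjoint_sup_right_of_disjoint_sup_left
    ((hg i).mono_left (sup_le (hfg i t) hrow))).mono_right (iSup₂_le ?_)
  rintro ⟨j, s⟩ hne
  obtain rfl | hji := eq_or_ne j i
  · exact le_sup_of_le_left (le_iSup₂_of_le s (fun h => hne (h ▸ rfl)) le_rfl)
  · exact le_sup_of_le_right (le_iSup₂_of_le j hji (hfg j s))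

end Independence

section CommutatorSpace

variable {K G V : Type*} [Field K] [AddCommGroup V] [Module K V]

theorem pow_apply_eq_add_nsmul (f : Module.End K V) {v : V}
    (h : f (f v - v) = f v - v) (n : ℕ) : (f ^ n) v = v + n • (f v - v) := by
  induction n with
  | zero => simp
  | succ n ih =>
    rw [pow_succ', Module.End.mul_apply, ih, map_add, map_nsmul, h, succ_nsmul]
    abel

theorem disjoint_range_sub_id_ker_sub_id {f : Module.End K V} {n : ℕ} (hf : f ^ n = 1)
    (hn : (n : K) ≠ 0) :
    Disjoint (LinearMap.range (f - LinearMap.id)) (LinearMap.ker (f - LinearMap.id)) := by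
  rw [Submodule.disjoint_def]
  rintro _ ⟨v, rfl⟩ hfix
  have h := pow_apply_eq_add_nsmul f (v := v) (by simpa [sub_eq_zero] using hfix) n
  rw [hf, Module.End.one_apply, left_eq_add, ← Nat.cast_smul_eq_nsmul K, smul_eq_zero] at h
  exact h.resolve_left hn

variable [Monoid G]

/-- The commutator space `[g, V]` of an element `g` acting on `V`. -/
def commutatorSpace (ρ : Representation K G V) (g : G) : Submodule K V :=
  LinearMap.range (ρ g - LinearMap.id)

theorem apply_sub_self_mem_commutatorSpace (ρ : Representation K G V) (g : G) (v : V) :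
    ρ g v - v ∈ commutatorSpace ρ g := ⟨v, rfl⟩

variable {ι : Type*}

/-- The hypothesis `V = ⨁ᵢ [xᵢ, V]` on a family of elements `xᵢ` acting on `V`. -/
structure IsCommutatorDecomposition (ρ : Representation K G V) (x : ι → G) : Prop where
  iSupIndep : iSupIndep fun i => commutatorSpace ρ (x i)
  iSup_eq_top : ⨆ i, commutatorSpace ρ (x i) = ⊤

variable {ρ : Representation K G V} {x : ι → G}

theorem map_pow_apply_sub_self_mem_commutatorSpace (g : G) (v : V) (n : ℕ) :
    ρ (g ^ n) v - v ∈ commutatorSpace ρ g := by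
  induction n with
  | zero => simp
  | succ n ih =>
    rw [pow_succ', map_mul, Module.End.mul_apply, ← sub_add_sub_cancel _ (ρ (g ^ n) v)]
    exact add_mem (apply_sub_self_mem_commutatorSpace ρ g _) ih

theorem apply_mem_commutatorSpace {g : G} {u : V} (hu : u ∈ commutatorSpace ρ g) :
    ρ g u ∈ commutatorSpace ρ g := by
  simpa using add_mem (apply_sub_self_mem_commutatorSpace ρ g u) hu

theorem apply_eq_self_of_mem_commutatorSpace {g h : G} {u : V} (hcomm : Commute (ρ g) (ρ h))
    (hdisj : Disjoint (commutatorSpace ρ g) (commutatorSpace ρ h))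
    (hu : u ∈ commutatorSpace ρ g) : ρ h u = u := by
  have hmem : ρ h u ∈ commutatorSpace ρ g := by
    obtain ⟨v, rfl⟩ := hu
    refine ⟨ρ h v, ?_⟩
    simpa using LinearMap.congr_fun hcomm.eq v
  exact sub_eq_zero.mp (Submodule.disjoint_def.mp hdisj _ (sub_mem hmem hu)
    (apply_sub_self_mem_commutatorSpace ρ h u))

theorem map_subtype_commutatorSpace_le (σ : Subrepresentation ρ) (g : G) :
    (commutatorSpace σ.toRepresentation g).map σ.toSubmodule.subtype ≤ commutatorSpace ρ g := by
  rintro _ ⟨_, ⟨u, rfl⟩, rfl⟩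
  exact ⟨u, rfl⟩

theorem commutatorSpace_le_sup_of_isCompl {σ τ : Subrepresentation ρ} (h : IsCompl σ τ) (g : G) :
    commutatorSpace ρ g ≤
      (commutatorSpace σ.toRepresentation g).map σ.toSubmodule.subtype ⊔ τ.toSubmodule := by
  rintro _ ⟨v, rfl⟩
  have htop : σ.toSubmodule ⊔ τ.toSubmodule = ⊤ := by
    rw [← Subrepresentation.toSubmodule_sup, h.sup_eq_top]; rfl
  obtain ⟨u, hu, w, hw, rfl⟩ := Submodule.mem_sup.mp (htop ▸ Submodule.mem_top : v ∈ _)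
  rw [map_add]
  exact Submodule.add_mem_sup ⟨_, ⟨⟨u, hu⟩, rfl⟩, rfl⟩
    (sub_mem (τ.apply_mem_toSubmodule g hw) hw)

theorem IsCommutatorDecomposition.subrepresentation (hx : IsCommutatorDecomposition ρ x)
    {σ τ : Subrepresentation ρ} (h : IsCompl σ τ) :
    IsCommutatorDecomposition σ.toRepresentation x where
  iSupIndep := iSupIndep_of_map_le σ.toSubmodule.injective_subtype hx.iSupIndep
    fun i => map_subtype_commutatorSpace_le σ (x i)
  iSup_eq_top := by
    have hbot : σ.toSubmodule ⊓ τ.toSubmodule = ⊥ := by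
      rw [← Subrepresentation.toSubmodule_inf, h.inf_eq_bot]; rfl
    have htop : (⨆ i, commutatorSpace σ.toRepresentation (x i)).map σ.toSubmodule.subtype ⊔
        τ.toSubmodule = ⊤ := by
      rw [eq_top_iff, ← hx.iSup_eq_top]
      exact iSup_le fun i => (commutatorSpace_le_sup_of_isCompl h (x i)).trans
        (sup_le_sup_right (Submodule.map_mono (le_iSup
          (fun i => commutatorSpace σ.toRepresentation (x i)) i)) _)
    have hmap : (⨆ i, commutatorSpace σ.toRepresentation (x i)).map σ.toSubmodule.subtype =
        σ.toSubmodule :=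
      eq_of_le_of_inf_le_of_sup_le (Submodule.map_subtype_le _ _) (hbot.trans_le bot_le)
        (le_top.trans_eq htop.symm)
    exact Submodule.map_injective_of_injective σ.toSubmodule.injective_subtype
      (hmap.trans (Submodule.map_subtype_top _).symm)

/-- A subrepresentation of a subrepresentation, viewed inside the ambient representation. -/
def mapSubtype {σ : Subrepresentation ρ} (τ : Subrepresentation σ.toRepresentation) :
    Subrepresentation ρ where
  toSubmodule := τ.toSubmodule.map σ.toSubmodule.subtype
  apply_mem_toSubmodule g := by
    rintro _ ⟨v, hv, rfl⟩
    exact ⟨_, τ.apply_mem_toSubmodule g hv, rfl⟩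

theorem isIrreducible_toRepresentation_of_isAtom {σ : Subrepresentation ρ} (hσ : IsAtom σ) :
    σ.toRepresentation.IsIrreducible where
  exists_pair_ne := ⟨⊥, ⊤, fun h => hσ.1 <| Subrepresentation.toSubmodule_injective <|
    (Submodule.subsingleton_iff_eq_bot).mp <| (Submodule.subsingleton_iff K).mp <|
    subsingleton_of_bot_eq_top (congrArg Subrepresentation.toSubmodule h)⟩
  eq_bot_or_eq_top τ := by
    have hinj := Submodule.map_injective_of_injective σ.toSubmodule.injective_subtype
    refine (hσ.le_iff.mp (show mapSubtype τ ≤ σ from Submodule.map_subtype_le _ _)).imp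
      (fun h => ?_) (fun h => ?_)
    · exact Subrepresentation.toSubmodule_injective (hinj
        ((congrArg Subrepresentation.toSubmodule h).trans (Submodule.map_bot _).symm))
    · exact Subrepresentation.toSubmodule_injective (hinj
        ((congrArg Subrepresentation.toSubmodule h).trans (Submodule.map_subtype_top _).symm))

-- By Maschke's theorem the irreducible subrepresentations span `V`.
theorem exists_isIrreducible_not_commute {G : Type*} [Group G] [Finite G]
    {ρ : Representation K G V} [NeZero (Nat.card G : K)] {x : ι → G}
    (hx : IsCommutatorDecomposition ρ x) (hcomm : ¬ ∀ i j, Commute (ρ (x i)) (ρ (x j))) :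
    ∃ σ : Subrepresentation ρ, σ.toRepresentation.IsIrreducible ∧
      IsCommutatorDecomposition σ.toRepresentation x ∧
      ¬ ∀ i j, Commute (σ.toRepresentation (x i)) (σ.toRepresentation (x j)) := by
  by_contra! h
  refine hcomm fun i j => LinearMap.ext fun v => ?_
  have hv : ρ.asModuleEquiv.symm v ∈
      ⨆ N : {N : Submodule (MonoidAlgebra K G) ρ.asModule | IsSimpleModule (MonoidAlgebra K G) N},
        (N : Submodule (MonoidAlgebra K G) ρ.asModule) := by
    rw [← sSup_eq_iSup', IsSemisimpleModule.sSup_simples_eq_top]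
    exact Submodule.mem_top
  refine Submodule.iSup_induction _ hv
    (motive := fun v => (ρ (x i) * ρ (x j)) (ρ.asModuleEquiv v) =
      (ρ (x j) * ρ (x i)) (ρ.asModuleEquiv v))
    ?_ (by simp) (fun u w hu hw => by simp only [map_add, hu, hw])
  rintro ⟨N, hN⟩ v hv
  let σ := Subrepresentation.subrepresentationSubmoduleOrderIso.symm N
  have hσ : IsAtom σ := (OrderIso.isAtom_iff _ _).mpr (isSimpleModule_iff_isAtom.mp hN)
  obtain ⟨τ, hτ⟩ := exists_isCompl σ
  have := h σ (isIrreducible_toRepresentation_of_isAtom hσ) (hx.subrepresentation hτ) i j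
  exact congrArg Subtype.val (LinearMap.congr_fun this.eq ⟨v, hv⟩)

end CommutatorSpace

theorem exists_notMem_pow_mem_commutatorElement_mem {p : ℕ} [Fact p.Prime] {G : Type*} [Group G]
    [Finite G] (hG : IsPGroup p G) {N : Subgroup G} [N.Normal] (hN : N ≠ ⊤) :
    ∃ c ∉ N, c ^ p ∈ N ∧ ∀ g, ⁅c, g⁆ ∈ N := by
  have : Nontrivial (G ⧸ N) := QuotientGroup.nontrivial_iff.mpr hN
  have : Nontrivial (center (G ⧸ N)) := (hG.to_quotient N).center_nontrivial
  have hdvd : p ∣ Nat.card (center (G ⧸ N)) :=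
    ((hG.to_quotient N).to_subgroup _).card_eq_or_dvd.resolve_left Finite.one_lt_card.ne'
  obtain ⟨⟨z, hz⟩, hord⟩ := exists_prime_orderOf_dvd_card' p hdvd
  replace hord : orderOf z = p := (Subgroup.orderOf_mk z hz).symm.trans hord
  obtain ⟨c, rfl⟩ := QuotientGroup.mk_surjective z
  refine ⟨c, fun hc => ?_, ?_, fun g => ?_⟩
  · rw [(QuotientGroup.eq_one_iff c).mpr hc, orderOf_one] at hord
    exact (Fact.out : p.Prime).one_lt.ne hord
  · rw [← QuotientGroup.eq_one_iff, QuotientGroup.mk_pow, ← hord, pow_orderOf_eq_one]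
  · rw [← QuotientGroup.eq_one_iff]
    exact commutatorElement_eq_one_iff_commute.mpr (mem_center_iff.mp hz g).symm

section Character

variable {p : ℕ} [Fact p.Prime] {K G : Type*} [Field K]

-- All `p`-th roots of unity of a field are powers of any nontrivial one.
theorem exists_shift_of_pow_eq_one [Group G] {χ : G →* Kˣ} (hχ : ∀ g, χ g ^ p = 1) {g₀ : G}
    (h : χ g₀ ≠ 1) :
    ∃ s : G →* Multiplicative (ZMod p), s g₀ = .ofAdd 1 ∧
      ∀ g, zmodPowersHom (χ g₀) (hχ g₀) (s g) = χ g := by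
  have hinj := injective_zmodPowersHom_of_ne_one (hχ g₀) h
  let e := MonoidHom.ofInjective hinj
  have hmem (g : G) : χ g ∈ (zmodPowersHom (χ g₀) (hχ g₀)).range := by
    have hroot : IsPrimitiveRoot (χ g₀) p :=
      IsPrimitiveRoot.iff_orderOf.mpr (orderOf_eq_prime (hχ g₀) h)
    have hpow : χ g ∈ zpowers (χ g₀) := by
      rw [hroot.zpowers_eq, mem_rootsOfUnity]
      exact hχ g
    exact zpowers_le.mpr (MonoidHom.mem_range.mpr ⟨_, zmodPowersHom_ofAdd_one _ _⟩) hpow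
  have hs (g : G) : zmodPowersHom (χ g₀) (hχ g₀) (e.symm ⟨χ g, hmem g⟩) = χ g :=
    congrArg Subtype.val (e.apply_symm_apply ⟨χ g, hmem g⟩)
  exact ⟨e.symm.toMonoidHom.comp (χ.codRestrict _ hmem),
    hinj ((hs g₀).trans (zmodPowersHom_ofAdd_one _ _).symm), hs⟩

end Character

section Irreducible

variable {K G V : Type*} [Field K] [Group G] [AddCommGroup V] [Module K V]
  {ρ : Representation K G V}

theorem finiteDimensional_of_isIrreducible [Finite G] [ρ.IsIrreducible] :
    FiniteDimensional K V := by
  have : Module.Finite (MonoidAlgebra K G) ρ.asModule := inferInstance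
  exact Module.Finite.trans (R := K) (MonoidAlgebra K G) ρ.asModule

theorem exists_eq_smul_one_of_forall_commute [IsAlgClosed K] [FiniteDimensional K V]
    [ρ.IsIrreducible] {f : Module.End K V} (hf : ∀ g, Commute f (ρ g)) : ∃ a : K, f = a • 1 := by
  obtain ⟨a, ha⟩ := (IsIrreducible.algebraMap_intertwiningMap_bijective_of_isAlgClosed (ρ := ρ)).2
    (LinearMap.intertwiningMap_of_isIntertwiningMap ρ ρ f
      fun g v => LinearMap.congr_fun (hf g).eq v)
  exact ⟨a, LinearMap.ext fun v =>
    congrArg (fun φ : IntertwiningMap ρ ρ => φ v)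
      (ha.symm.trans (IntertwiningMap.algebraMap_apply ρ a))⟩

/-- The subgroup of those elements that commute with all of `G` in the representation `ρ`. -/
def centralSubgroup (ρ : Representation K G V) : Subgroup G :=
  (center ρ.toHomUnits.range).comap ρ.toHomUnits.rangeRestrict

instance : (centralSubgroup ρ).Normal := by unfold centralSubgroup; infer_instance

theorem mem_centralSubgroup_iff {g : G} : g ∈ centralSubgroup ρ ↔ ∀ h, Commute (ρ g) (ρ h) := by
  have hcomm (h : G) : ρ.toHomUnits.rangeRestrict h * ρ.toHomUnits.rangeRestrict g =
      ρ.toHomUnits.rangeRestrict g * ρ.toHomUnits.rangeRestrict h ↔ Commute (ρ g) (ρ h) := by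
    rw [Subtype.ext_iff, Units.ext_iff]
    exact eq_comm
  rw [centralSubgroup, mem_comap, mem_center_iff,
    ρ.toHomUnits.rangeRestrict_surjective.forall]
  exact forall_congr' hcomm

end Irreducible

section CommutatorCharacter

variable {K G V : Type*} [Field K] [Group G] [AddCommGroup V] [Module K V]
  {ρ : Representation K G V} {c : G} {χ : G →* Kˣ}

theorem nontrivial_of_isIrreducible [ρ.IsIrreducible] : Nontrivial V :=
  IsSimpleModule.nontrivial (MonoidAlgebra K G) ρ.asModule

theorem smul_map_left_injective [Nontrivial V] (g : G) : Function.Injective fun a : K => a • ρ g :=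
  smul_left_injective K ((Group.isUnit g).map ρ).ne_zero

theorem exists_commutatorCharacter [IsAlgClosed K] [FiniteDimensional K V] [ρ.IsIrreducible]
    (hc : ∀ g, ⁅c, g⁆ ∈ centralSubgroup ρ) :
    ∃ χ : G →* Kˣ, ∀ g, ρ (c * g) = (χ g : K) • ρ (g * c) := by
  have : Nontrivial V := nontrivial_of_isIrreducible (ρ := ρ)
  have hschur (g : G) : ∃ a : K, ρ ⁅c, g⁆ = a • 1 :=
    exists_eq_smul_one_of_forall_commute (mem_centralSubgroup_iff.mp (hc g))
  choose a ha using hschur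
  have hcg (g : G) : ρ (c * g) = a g • ρ (g * c) := by
    rw [show c * g = ⁅c, g⁆ * (g * c) by group, map_mul, ha, smul_one_mul]
  have hone : a 1 = 1 := smul_map_left_injective (ρ := ρ) c <| by simpa using (hcg 1).symm
  have hmul (g h : G) : a (g * h) = a g * a h :=
    smul_map_left_injective (ρ := ρ) (g * h * c) <| calc
      a (g * h) • ρ (g * h * c) = ρ (c * g) * ρ h := by rw [← hcg, ← map_mul, mul_assoc]
      _ = a g • (ρ g * ρ (c * h)) := by
        rw [hcg, smul_mul_assoc, ← map_mul, ← map_mul, mul_assoc]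
      _ = (a g * a h) • ρ (g * h * c) := by
        rw [hcg, mul_smul_comm, smul_smul, ← map_mul, mul_assoc]
  exact ⟨MonoidHom.toHomUnits ⟨⟨a, hone⟩, hmul⟩, hcg⟩

theorem map_pow_mul_eq_smul (hχ : ∀ g, ρ (c * g) = (χ g : K) • ρ (g * c)) (g : G) (n : ℕ) :
    ρ (c ^ n * g) = (χ g : K) ^ n • ρ (g * c ^ n) := by
  induction n with
  | zero => simp
  | succ n ih =>
    rw [pow_succ', mul_assoc, map_mul, ih, mul_smul_comm, ← map_mul, ← mul_assoc, map_mul, hχ,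
      smul_mul_assoc, ← map_mul, mul_assoc, smul_smul, ← pow_succ]

theorem commutatorCharacter_pow_eq_one [Nontrivial V]
    (hχ : ∀ g, ρ (c * g) = (χ g : K) • ρ (g * c)) {n : ℕ} (hc : c ^ n ∈ centralSubgroup ρ)
    (g : G) : χ g ^ n = 1 := by
  refine Units.ext (smul_map_left_injective (ρ := ρ) (g * c ^ n) ?_)
  have h := (mem_centralSubgroup_iff.mp hc g).eq
  rw [← map_mul, map_pow_mul_eq_smul hχ, ← map_mul] at h
  simpa using h

theorem exists_commutatorCharacter_ne_one {ι : Type*} {x : ι → G} (hc : c ∉ centralSubgroup ρ)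
    (hχ : ∀ g, ρ (c * g) = (χ g : K) • ρ (g * c)) (hx : closure (Set.range x) = ⊤) :
    ∃ j, χ (x j) ≠ 1 := by
  by_contra! h
  have hone : χ = 1 := MonoidHom.eq_of_eqOn_dense hx (Set.forall_mem_range.mpr h)
  refine hc (mem_centralSubgroup_iff.mpr fun g => ?_)
  simpa [hone] using! hχ g

end CommutatorCharacter

/-- An imprimitivity system of `p` blocks, indexed by `ZMod p`, on which the group acts by
translations of `ZMod p`. -/
structure BlockSystem (p : ℕ) {K G V : Type*} [Field K] [Group G] [AddCommGroup V] [Module K V]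
    (ρ : Representation K G V) where
  block : ZMod p → Submodule K V
  shift : G →* Multiplicative (ZMod p)
  iSupIndep_block : iSupIndep block
  iSup_block : ⨆ i, block i = ⊤
  apply_mem_block (g : G) {i : ZMod p} {v : V} (hv : v ∈ block i) :
    ρ g v ∈ block (i + (shift g).toAdd)

section Existence

variable {p : ℕ} [Fact p.Prime] {K G V : Type*} [Field K] [Group G]
  [AddCommGroup V] [Module K V] {ρ : Representation K G V}

theorem iSup_eq_top_of_isIrreducible [ρ.IsIrreducible] {κ : Type*} {L : κ → Submodule K V}
    (hL : ∀ g i v, v ∈ L i → ρ g v ∈ ⨆ i, L i) {i : κ} (hi : L i ≠ ⊥) : ⨆ i, L i = ⊤ := by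
  let σ : Subrepresentation ρ := ⟨⨆ i, L i, fun g =>
    (iSup_le fun i v hv => hL g i v hv : ⨆ i, L i ≤ (⨆ i, L i).comap (ρ g))⟩
  refine congrArg Subrepresentation.toSubmodule ((eq_bot_or_eq_top σ).resolve_left fun h => hi ?_)
  exact le_bot_iff.mp ((le_iSup L i).trans_eq (congrArg Subrepresentation.toSubmodule h))

theorem exists_blockSystem_of_commutatorCharacter [IsAlgClosed K] [FiniteDimensional K V]
    [ρ.IsIrreducible] {c : G} {χ : G →* Kˣ}
    (hχ : ∀ g, ρ (c * g) = (χ g : K) • ρ (g * c))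
    (hpow : ∀ g, χ g ^ p = 1) {g₀ : G} (h : χ g₀ ≠ 1) :
    ∃ B : BlockSystem p ρ, B.shift g₀ = .ofAdd 1 := by
  have : Nontrivial V := nontrivial_of_isIrreducible (ρ := ρ)
  obtain ⟨s, hs, hsχ⟩ := exists_shift_of_pow_eq_one hpow h
  let ψ := zmodPowersHom (χ g₀) (hpow g₀)
  obtain ⟨μ, hμ⟩ := Module.End.exists_eigenvalue (ρ c)
  have hμ0 : μ ≠ 0 := by
    rintro rfl
    exact (spectrum.zero_mem_iff K).mp hμ.mem_spectrum ((Group.isUnit c).map ρ)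
  let L (i : ZMod p) := Module.End.eigenspace (ρ c) (ψ (Multiplicative.ofAdd i) * μ)
  have hL (g : G) {i : ZMod p} {v : V} (hv : v ∈ L i) : ρ g v ∈ L (i + (s g).toAdd) := by
    rw [Module.End.mem_eigenspace_iff] at hv ⊢
    rw [← Module.End.mul_apply, ← map_mul, hχ, map_mul, LinearMap.smul_apply,
      Module.End.mul_apply, hv, map_smul, smul_smul, ofAdd_add, map_mul, ofAdd_toAdd, hsχ]
    congr 1
    push_cast
    ring
  exact ⟨{
    block := L
    shift := s
    iSupIndep_block := (Module.End.eigenspaces_iSupIndep (ρ c)).comp fun i j hij =>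
      Multiplicative.ofAdd.injective (injective_zmodPowersHom_of_ne_one (hpow g₀) h
        (Units.ext (mul_right_cancel₀ hμ0 hij)))
    iSup_block := iSup_eq_top_of_isIrreducible
      (fun g i v hv => Submodule.mem_iSup_of_mem _ (hL g hv))
      (i := 0) (by simpa [L] using! hμ)
    apply_mem_block := hL }, hs⟩

theorem exists_blockSystem [IsAlgClosed K] [FiniteDimensional K V] [ρ.IsIrreducible] [Finite G]
    (hG : IsPGroup p G) {ι : Type*} {x : ι → G} (hx : closure (Set.range x) = ⊤)
    (hcomm : ¬ ∀ i j, Commute (ρ (x i)) (ρ (x j))) :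
    ∃ (B : BlockSystem p ρ) (j : ι), B.shift (x j) = .ofAdd 1 := by
  have : Nontrivial V := nontrivial_of_isIrreducible (ρ := ρ)
  have htop : centralSubgroup ρ ≠ ⊤ := fun h => hcomm fun i j =>
    mem_centralSubgroup_iff.mp (h ▸ mem_top (x i)) (x j)
  obtain ⟨c, hc, hcp, hcg⟩ := exists_notMem_pow_mem_commutatorElement_mem hG htop
  obtain ⟨χ, hχ⟩ := exists_commutatorCharacter hcg
  obtain ⟨j, hj⟩ := exists_commutatorCharacter_ne_one hc hχ hx
  obtain ⟨B, hB⟩ := exists_blockSystem_of_commutatorCharacter hχ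
    (commutatorCharacter_pow_eq_one hχ hcp) hj
  exact ⟨B, j, hB⟩

end Existence

namespace BlockSystem

variable {p : ℕ} {K G V : Type*} [Field K] [Group G] [AddCommGroup V] [Module K V]
  {ρ : Representation K G V} (B : BlockSystem p ρ) {g h : G}

/-- The stabilizer of the block at `0`, acting on that block. -/
def fiber : Subrepresentation (ρ.comp B.shift.ker.subtype) where
  toSubmodule := B.block 0
  apply_mem_toSubmodule g v hv := by
    simpa [MonoidHom.mem_ker.mp g.2] using B.apply_mem_block g.1 hv

theorem iSup_map_block {κ : Type*} (f : κ → V →ₗ[K] V) :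
    ⨆ a : κ × ZMod p, (B.block a.2).map (f a.1) = ⨆ i, LinearMap.range (f i) := by
  rw [iSup_prod]
  refine iSup_congr fun i => ?_
  change ⨆ t, (B.block t).map (f i) = _
  rw [← Submodule.map_iSup, B.iSup_block, Submodule.map_top]

theorem iSupIndep_map_block {κ : Type*} {f : κ → V →ₗ[K] V}
    (hf : iSupIndep fun i => LinearMap.range (f i))
    (hB : ∀ i t, (B.block t).map (f i) ≤ B.block t) :
    iSupIndep fun a : κ × ZMod p => (B.block a.2).map (f a.1) :=
  iSupIndep_prod_of_le hf (fun i => B.iSupIndep_block.mono (hB i)) fun _ _ => LinearMap.map_le_range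

theorem apply_zmodPowersHom_mem_block [NeZero p] (hg : g ^ p = 1) (t : ZMod p) {i : ZMod p} {v : V}
    (hv : v ∈ B.block i) :
    ρ (zmodPowersHom g hg (.ofAdd t)) v ∈ B.block (i + t * (B.shift g).toAdd) := by
  obtain ⟨n, rfl⟩ := ZMod.natCast_zmod_surjective t
  rw [zmodPowersHom_ofAdd_natCast, ← nsmul_eq_mul, ← toAdd_pow, ← map_pow]
  exact B.apply_mem_block (g ^ n) hv

variable [Fact p.Prime]

theorem exists_pow_mem_block (hg : B.shift g ≠ 1) (i j : ZMod p) :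
    ∃ n : ℕ, ∀ v ∈ B.block i, ρ (g ^ n) v ∈ B.block j := by
  obtain ⟨n, hn⟩ := ZMod.natCast_zmod_surjective ((j - i) / (B.shift g).toAdd)
  have hshift : i + (B.shift (g ^ n)).toAdd = j := by
    rw [map_pow, toAdd_pow, nsmul_eq_mul, hn, div_mul_cancel₀ _ (toAdd_eq_zero.not.mpr hg),
      add_sub_cancel]
  exact ⟨n, fun v hv => hshift ▸ B.apply_mem_block (g ^ n) hv⟩

theorem finrank_block_le [FiniteDimensional K V] (hg : B.shift g ≠ 1) (i j : ZMod p) :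
    Module.finrank K (B.block i) ≤ Module.finrank K (B.block j) := by
  obtain ⟨n, hn⟩ := B.exists_pow_mem_block hg i j
  calc Module.finrank K (B.block i)
    _ = Module.finrank K ((B.block i).map (ρ (g ^ n))) :=
      (Submodule.equivMapOfInjective _ (ρ.apply_bijective (g ^ n)).injective _).finrank_eq
    _ ≤ Module.finrank K (B.block j) :=
      Submodule.finrank_mono (Submodule.map_le_iff_le_comap.mpr hn)

theorem finrank_eq_mul_finrank_block_zero [FiniteDimensional K V] (hg : B.shift g ≠ 1) :
    Module.finrank K V = p * Module.finrank K (B.block 0) := by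
  have hint : DirectSum.IsInternal B.block :=
    DirectSum.isInternal_submodule_of_iSupIndep_of_iSup_eq_top B.iSupIndep_block B.iSup_block
  rw [← (LinearEquiv.ofBijective (DirectSum.coeLinearMap B.block) hint).finrank_eq,
    Module.finrank_directSum, Finset.sum_congr rfl fun i _ =>
      (B.finrank_block_le hg i 0).antisymm (B.finrank_block_le hg 0 i)]
  simp

theorem codisjoint_block_zero_commutatorSpace (hg : B.shift g ≠ 1) :
    Codisjoint (B.block 0) (commutatorSpace ρ g) := by
  rw [codisjoint_iff, eq_top_iff, ← B.iSup_block]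
  refine iSup_le fun i v hv => ?_
  obtain ⟨n, hn⟩ := B.exists_pow_mem_block hg i 0
  rw [← sub_sub_cancel (ρ (g ^ n) v) v, sub_eq_add_neg]
  exact Submodule.add_mem_sup (hn v hv) (neg_mem (map_pow_apply_sub_self_mem_commutatorSpace g v n))

-- Elements of `[g, V]` are killed by `∑ₜ gᵗ`, while the translates `gᵗ v` of a vector `v` of one
-- block lie in distinct blocks.
theorem disjoint_block_zero_commutatorSpace (hg : g ^ p = 1) (hgs : B.shift g ≠ 1) :
    Disjoint (B.block 0) (commutatorSpace ρ g) := by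
  rw [Submodule.disjoint_def]
  rintro _ hv ⟨u, rfl⟩
  let X (t : ZMod p) : Module.End K V := ρ (zmodPowersHom g hg (.ofAdd t))
  have hX (t : ZMod p) (w : V) : X t (ρ g w) = X (t + 1) w := by
    simp only [X, ofAdd_add, map_mul, zmodPowersHom_ofAdd_one, Module.End.mul_apply]
  have hsum : ∑ t, X t ((ρ g - LinearMap.id : Module.End K V) u) = 0 := by
    simp only [LinearMap.sub_apply, LinearMap.id_apply, map_sub, hX, Finset.sum_sub_distrib]
    exact sub_eq_zero.mpr (Equiv.sum_comp (Equiv.addRight (1 : ZMod p)) fun t => X t u)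
  have hindep : iSupIndep fun t : ZMod p => B.block (0 + t * (B.shift g).toAdd) := by
    refine B.iSupIndep_block.comp fun s t hst => ?_
    exact mul_right_cancel₀ (toAdd_eq_zero.not.mpr hgs) (add_left_cancel hst)
  have hzero := (iSupIndep_iff_finsetSum_eq_zero_imp_eq_zero _).mp hindep Finset.univ _
    (fun t _ => B.apply_zmodPowersHom_mem_block hg t hv) hsum 0 (Finset.mem_univ 0)
  simpa [X] using hzero

theorem isCompl_block_zero_commutatorSpace (hg : g ^ p = 1) (hgs : B.shift g ≠ 1) :
    IsCompl (B.block 0) (commutatorSpace ρ g) :=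
  ⟨B.disjoint_block_zero_commutatorSpace hg hgs, B.codisjoint_block_zero_commutatorSpace hgs⟩

theorem eq_two_of_disjoint_commutatorSpace [FiniteDimensional K V] [Nontrivial V] (hg : g ^ p = 1)
    (hgs : B.shift g ≠ 1) (hh : h ^ p = 1) (hhs : B.shift h ≠ 1)
    (hgh : Disjoint (commutatorSpace ρ g) (commutatorSpace ρ h)) : p = 2 := by
  have hdim := B.finrank_eq_mul_finrank_block_zero hgs
  have hgdim := Submodule.finrank_add_eq_of_isCompl (B.isCompl_block_zero_commutatorSpace hg hgs)
  have hhdim := Submodule.finrank_add_eq_of_isCompl (B.isCompl_block_zero_commutatorSpace hh hhs)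
  have hle := Submodule.finrank_add_finrank_le_of_disjoint hgh
  have hpos : 0 < Module.finrank K (B.block 0) :=
    Nat.pos_of_mul_pos_left (hdim ▸ Module.finrank_pos)
  have hp : p * Module.finrank K (B.block 0) ≤ 2 * Module.finrank K (B.block 0) := by lia
  exact (Nat.le_of_mul_le_mul_right hp hpos).antisymm (Fact.out : p.Prime).two_le

end BlockSystem

namespace BlockSystem

variable {p : ℕ} {K G V : Type*} [Field K] [Group G] [AddCommGroup V] [Module K V]
  {ρ : Representation K G V} (B : BlockSystem p ρ)

theorem apply_apply_eq_apply_fiber (a : B.shift.ker) (g : G) (v : B.fiber.toSubmodule) :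
    ρ a (ρ g v) = ρ g (B.fiber.toRepresentation (MulAut.conjNormal g⁻¹ a) v) := by
  have hconj : (a : G) * g = g * (MulAut.conjNormal g⁻¹ a : B.shift.ker) := by
    rw [MulAut.conjNormal_apply]; group
  rw [← Module.End.mul_apply, ← map_mul, hconj, map_mul]
  rfl

theorem map_sub_id_block_le (a : B.shift.ker) (t : ZMod p) :
    (B.block t).map (ρ a - LinearMap.id) ≤ B.block t := by
  rintro _ ⟨v, hv, rfl⟩
  exact sub_mem (by simpa [MonoidHom.mem_ker.mp a.2] using B.apply_mem_block a.1 hv) hv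

theorem commutatorSpace_fiber {π : V →ₗ[K] B.fiber.toSubmodule} {g : G}
    (hπ : ∀ v : B.fiber.toSubmodule, π (ρ g v) = v) (a : B.shift.ker) :
    commutatorSpace B.fiber.toRepresentation (MulAut.conjNormal g⁻¹ a) =
      (((B.block 0).map (ρ g)).map (ρ a - LinearMap.id)).map π := by
  have happly (v : B.fiber.toSubmodule) : π ((ρ a - LinearMap.id : Module.End K V) (ρ g v)) =
      B.fiber.toRepresentation (MulAut.conjNormal g⁻¹ a) v - v := by
    rw [LinearMap.sub_apply, LinearMap.id_apply, map_sub, hπ, apply_apply_eq_apply_fiber, hπ]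
  refine le_antisymm ?_ ?_
  · rintro _ ⟨v, rfl⟩
    exact ⟨_, ⟨_, ⟨v, v.2, rfl⟩, rfl⟩, happly v⟩
  · rintro _ ⟨_, ⟨_, ⟨v, hv, rfl⟩, rfl⟩, rfl⟩
    exact ⟨⟨v, hv⟩, (happly ⟨v, hv⟩).symm⟩

theorem map_block_zero [NeZero p] {x : G} (hx : x ^ p = 1) (hs : B.shift x = .ofAdd 1)
    (t : ZMod p) :
    (B.block 0).map (ρ (zmodPowersHom x hx (.ofAdd t))) = B.block t := by
  refine le_antisymm ?_ fun v hv => ⟨ρ (zmodPowersHom x hx (.ofAdd (-t))) v, ?_, ?_⟩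
  · rintro _ ⟨v, hv, rfl⟩
    simpa [hs] using B.apply_zmodPowersHom_mem_block hx t hv
  · simpa [hs] using B.apply_zmodPowersHom_mem_block hx (-t) hv
  · simp [← Module.End.mul_apply, ← map_mul]

variable [Fact p.Prime]

theorem shift_ne_one_of_eq_ofAdd_one {x : G} (hs : B.shift x = .ofAdd 1) : B.shift x ≠ 1 :=
  hs ▸ ofAdd_eq_one.not.mpr one_ne_zero

variable {x : G} (hx : x ^ p = 1) (hs : B.shift x = .ofAdd 1)

/-- The projection of `V` onto the block at `0` along `[x, V]`, for an element `x` of order `p` that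
translates the blocks. -/
noncomputable def fiberProjection : V →ₗ[K] B.fiber.toSubmodule :=
  Submodule.projectionOnto _ _
    (B.isCompl_block_zero_commutatorSpace hx (B.shift_ne_one_of_eq_ofAdd_one hs))

theorem ker_fiberProjection : LinearMap.ker (B.fiberProjection hx hs) = commutatorSpace ρ x :=
  Submodule.ker_projectionOnto _

theorem fiberProjection_apply_zmodPowersHom (t : ZMod p) (v : B.fiber.toSubmodule) :
    B.fiberProjection hx hs (ρ (zmodPowersHom x hx (.ofAdd t)) v) = v := by
  obtain ⟨n, hn⟩ := exists_zmodPowersHom_eq_pow x hx (.ofAdd t)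
  have hker : ρ (x ^ n) v - v ∈ LinearMap.ker (B.fiberProjection hx hs) :=
    B.ker_fiberProjection hx hs ▸ map_pow_apply_sub_self_mem_commutatorSpace x (v : V) n
  rw [hn, sub_eq_zero.mp ((map_sub _ _ _).symm.trans hker)]
  exact Submodule.projectionOnto_apply_left _ v

end BlockSystem

section Fiber

variable {p : ℕ} {K G V ι : Type*} [Field K] [Group G] [AddCommGroup V]
  [Module K V] {ρ : Representation K G V} (B : BlockSystem p ρ) {x : ι → G} {j : ι}

/-- The conjugates by the powers of `x j` of the other members of the family `x`, when these
stabilize the blocks of `B`. -/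
def BlockSystem.conjFamily (hj : x j ^ p = 1) (hker : ∀ i ≠ j, x i ∈ B.shift.ker)
    (a : {i // i ≠ j} × ZMod p) : B.shift.ker :=
  MulAut.conjNormal (zmodPowersHom (x j) hj (.ofAdd a.2))⁻¹ ⟨x a.1, hker a.1 a.1.2⟩

theorem IsCommutatorDecomposition.fiber [Fact p.Prime] (h : IsCommutatorDecomposition ρ x)
    (hj : x j ^ p = 1) (hs : B.shift (x j) = .ofAdd 1) (hker : ∀ i ≠ j, x i ∈ B.shift.ker) :
    IsCommutatorDecomposition B.fiber.toRepresentation (B.conjFamily hj hker) := by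
  let π := B.fiberProjection hj hs
  let f (i : {i // i ≠ j}) : V →ₗ[K] V := ρ (x i) - LinearMap.id
  let N (a : {i // i ≠ j} × ZMod p) : Submodule K V := (B.block a.2).map (f a.1)
  have hcomm : (fun a => commutatorSpace B.fiber.toRepresentation (B.conjFamily hj hker a)) =
      fun a => (N a).map π := funext fun a => by
    rw [BlockSystem.conjFamily, B.commutatorSpace_fiber
      (B.fiberProjection_apply_zmodPowersHom hj hs a.2), B.map_block_zero hj hs]
  have hsup : ⨆ a, N a = ⨆ (i) (_ : i ≠ j), commutatorSpace ρ (x i) :=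
    (B.iSup_map_block f).trans iSup_subtype
  have hindep : _root_.iSupIndep N :=
    B.iSupIndep_map_block (f := f) (h.iSupIndep.comp Subtype.val_injective)
      fun i t => B.map_sub_id_block_le ⟨x i, hker i i.2⟩ t
  have hker_proj : LinearMap.ker π = commutatorSpace ρ (x j) := B.ker_fiberProjection hj hs
  constructor
  · rw [hcomm]
    exact iSupIndep_map_of_disjoint_ker hindep (hsup ▸ hker_proj ▸ (h.iSupIndep j).symm)
  · calc ⨆ a, commutatorSpace B.fiber.toRepresentation (B.conjFamily hj hker a)
      _ = (⨆ a, N a).map π := by rw [hcomm, Submodule.map_iSup]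
      _ = (⨆ i, commutatorSpace ρ (x i)).map π := by
        rw [hsup, iSup_split_single (fun i => commutatorSpace ρ (x i)) j, Submodule.map_sup,
          ← hker_proj, LinearMap.le_ker_iff_map.mp le_rfl, bot_sup_eq]
      _ = ⊤ := by
        rw [h.iSup_eq_top, Submodule.map_top]
        exact Submodule.range_projectionOnto _

end Fiber

namespace BlockSystem

variable {p : ℕ} [Fact p.Prime] {K G V ι : Type*} [Field K] [Group G] [AddCommGroup V]
  [Module K V] {ρ : Representation K G V} (B : BlockSystem p ρ)

theorem commute_of_forall_commute_fiber {g : G} (hg : g ^ p = 1) (hs : B.shift g = .ofAdd 1)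
    {a b : B.shift.ker}
    (hab : ∀ t : ZMod p, Commute
      (B.fiber.toRepresentation (MulAut.conjNormal (zmodPowersHom g hg (.ofAdd t))⁻¹ a))
      (B.fiber.toRepresentation (MulAut.conjNormal (zmodPowersHom g hg (.ofAdd t))⁻¹ b))) :
    Commute (ρ a) (ρ b) := by
  refine LinearMap.eqLocus_eq_top.mp (top_le_iff.mp (B.iSup_block ▸ iSup_le fun t => ?_))
  rw [← B.map_block_zero hg hs t]
  rintro _ ⟨v, hv, rfl⟩
  lift v to B.fiber.toSubmodule using hv
  rw [LinearMap.mem_eqLocus]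
  simp only [Module.End.mul_apply, B.apply_apply_eq_apply_fiber]
  exact congrArg (fun w : B.fiber.toSubmodule => ρ (zmodPowersHom g hg (.ofAdd t)) w)
    (LinearMap.congr_fun (hab t).eq v)

variable {x : ι → G} {j : ι} (hj : x j ^ p = 1) (hker : ∀ i ≠ j, x i ∈ B.shift.ker)

theorem conjFamily_pow (hx : ∀ i, x i ^ p = 1) (a : {i // i ≠ j} × ZMod p) :
    B.conjFamily hj hker a ^ p = 1 := by
  rw [conjFamily, ← map_pow, MulEquivClass.map_eq_one_iff]
  exact Subtype.ext (hx a.1)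

theorem commute_conj_of_commute_conjFamily (hs : B.shift (x j) = .ofAdd 1)
    (hcomm : ∀ a b, Commute (B.fiber.toRepresentation (B.conjFamily hj hker a))
      (B.fiber.toRepresentation (B.conjFamily hj hker b))) (i : {i // i ≠ j}) (n : ℕ) :
    Commute (ρ (x i)) (ρ (x j ^ n * x i * (x j ^ n)⁻¹)) := by
  let y : B.shift.ker := ⟨x i, hker i i.2⟩
  refine B.commute_of_forall_commute_fiber hj hs (a := y)
    (b := MulAut.conjNormal (x j ^ n) y) fun t => ?_
  have hconj : MulAut.conjNormal (zmodPowersHom (x j) hj (.ofAdd t))⁻¹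
      (MulAut.conjNormal (x j ^ n) y) = B.conjFamily hj hker (i, t - n) := by
    rw [conjFamily, sub_eq_neg_add, ofAdd_add, ofAdd_neg, map_mul, map_inv (zmodPowersHom (x j) hj),
      mul_inv_rev, inv_inv, zmodPowersHom_ofAdd_natCast, ← MulAut.mul_apply, ← map_mul]
  exact hconj ▸ hcomm (i, t) (i, t - n)

theorem pow_apply_eq_apply_conjFamily
    (h : IsCommutatorDecomposition B.fiber.toRepresentation (B.conjFamily hj hker))
    (hcomm : ∀ a b, Commute (B.fiber.toRepresentation (B.conjFamily hj hker a))
      (B.fiber.toRepresentation (B.conjFamily hj hker b)))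
    (i : {i // i ≠ j}) (t : ZMod p) {u : B.fiber.toSubmodule}
    (hu : u ∈ commutatorSpace B.fiber.toRepresentation (B.conjFamily hj hker (i, t)))
    {n : ℕ} (hn : n < p) :
    ρ ((x i * x j) ^ (n + 1)) (ρ (zmodPowersHom (x j) hj (.ofAdd (t - 1))) u) =
      ρ (zmodPowersHom (x j) hj (.ofAdd (t + n)))
        (B.fiber.toRepresentation (B.conjFamily hj hker (i, t)) u) := by
  have hstep (r : ZMod p) (w : B.fiber.toSubmodule) :
      ρ (x i * x j) (ρ (zmodPowersHom (x j) hj (.ofAdd r)) w) =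
        ρ (zmodPowersHom (x j) hj (.ofAdd (r + 1)))
          (B.fiber.toRepresentation (B.conjFamily hj hker (i, r + 1)) w) := by
    rw [map_mul, Module.End.mul_apply, ← Module.End.mul_apply (ρ (x j)), ← map_mul]
    nth_rw 1 [← zmodPowersHom_ofAdd_one (x j) hj]
    rw [← map_mul, ← ofAdd_add, add_comm 1]
    exact B.apply_apply_eq_apply_fiber ⟨x i, hker i i.2⟩ _ w
  induction n with
  | zero => simpa using hstep (t - 1) u
  | succ n ih =>
    have hne : (i, t) ≠ (i, t + n + 1) := fun h => by
      have hzero : ((n + 1 : ℕ) : ZMod p) = 0 := by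
        simpa [add_assoc] using (congrArg Prod.snd h).symm
      exact Nat.not_dvd_of_pos_of_lt n.succ_pos hn ((ZMod.natCast_eq_zero_iff _ _).mp hzero)
    rw [pow_succ', map_mul, Module.End.mul_apply, ih (by lia), hstep,
      apply_eq_self_of_mem_commutatorSpace (hcomm (i, t) _) (h.iSupIndep.pairwiseDisjoint hne)
        (apply_mem_commutatorSpace hu), Nat.cast_succ, add_assoc]

theorem hasSectionIsomorphicTo_of_commute_conjFamily [Nontrivial B.fiber.toSubmodule]
    (hp : (p : K) ≠ 0) (hx : ∀ i, x i ^ p = 1) (hs : B.shift (x j) = .ofAdd 1)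
    (h : IsCommutatorDecomposition B.fiber.toRepresentation (B.conjFamily hj hker))
    (hcomm : ∀ a b, Commute (B.fiber.toRepresentation (B.conjFamily hj hker a))
      (B.fiber.toRepresentation (B.conjFamily hj hker b))) :
    HasSectionIsomorphicTo G (WreathZpZp p) := by
  obtain ⟨⟨i, t⟩, hit⟩ : ∃ a,
      commutatorSpace B.fiber.toRepresentation (B.conjFamily hj hker a) ≠ ⊥ := by
    by_contra! hbot
    simpa [hbot] using h.iSup_eq_top
  obtain ⟨u, hu, hu0⟩ := Submodule.exists_mem_ne_zero_of_ne_bot hit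
  refine hasSectionIsomorphicTo_wreathZpZp_of_monoidHom ρ hj (hx i)
    (B.commute_conj_of_commute_conjFamily hj hker hs hcomm i) fun hone => hu0 ?_
  have hpow := B.pow_apply_eq_apply_conjFamily hj hker h hcomm i t hu
    (Nat.sub_one_lt (Fact.out : p.Prime).ne_zero)
  rw [Nat.sub_add_cancel (Fact.out : p.Prime).one_le, hone, Nat.cast_pred (Fact.out : p.Prime).pos,
    ZMod.natCast_self, zero_sub, ← sub_eq_add_neg] at hpow
  have hfix : B.fiber.toRepresentation (B.conjFamily hj hker (i, t)) u = u :=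
    (Subtype.ext ((ρ.apply_bijective _).injective hpow)).symm
  have hfinite : B.fiber.toRepresentation (B.conjFamily hj hker (i, t)) ^ p = 1 := by
    rw [← map_pow, B.conjFamily_pow hj hker hx, map_one]
  exact Submodule.disjoint_def.mp (disjoint_range_sub_id_ker_sub_id hfinite hp) u hu
    (sub_eq_zero.mpr hfix)

end BlockSystem

theorem natCast_card_ne_zero_of_isPGroup {p : ℕ} [Fact p.Prime] {K G : Type*} [Field K] [Group G]
    [Finite G] (hG : IsPGroup p G) (hp : (p : K) ≠ 0) : (Nat.card G : K) ≠ 0 := by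
  obtain ⟨n, hn⟩ := IsPGroup.iff_card.mp hG
  rw [hn, Nat.cast_pow]
  exact pow_ne_zero n hp

section AlgClosed

variable {p : ℕ} [Fact p.Prime] {K G V ι : Type*} [Field K] [IsAlgClosed K] [Group G] [Finite G]
  [AddCommGroup V] [Module K V] [FiniteDimensional K V] {ρ : Representation K G V} {x : ι → G}

theorem hasSectionIsomorphicTo_or_exists_fiber [ρ.IsIrreducible] (hp : (p : K) ≠ 0)
    (hG : IsPGroup p G) (hgen : closure (Set.range x) = ⊤) (hx : ∀ i, x i ^ p = 1)
    (h : IsCommutatorDecomposition ρ x) (hcomm : ¬ ∀ i j, Commute (ρ (x i)) (ρ (x j))) :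
    HasSectionIsomorphicTo G (WreathZpZp p) ∨
      ∃ (B : BlockSystem p ρ) (j : ι) (y : {i // i ≠ j} × ZMod p → B.shift.ker),
        Module.finrank K B.fiber.toSubmodule < Module.finrank K V ∧ (∀ a, y a ^ p = 1) ∧
        IsCommutatorDecomposition B.fiber.toRepresentation y ∧
        ¬ ∀ a b, Commute (B.fiber.toRepresentation (y a)) (B.fiber.toRepresentation (y b)) := by
  have : Nontrivial V := nontrivial_of_isIrreducible (ρ := ρ)
  obtain ⟨B, j, hs⟩ := exists_blockSystem hG hgen hcomm
  have hsj : B.shift (x j) ≠ 1 := B.shift_ne_one_of_eq_ofAdd_one hs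
  by_cases hker : ∀ i ≠ j, x i ∈ B.shift.ker
  · have hdim := B.finrank_eq_mul_finrank_block_zero hsj
    have hpos : 0 < Module.finrank K B.fiber.toSubmodule :=
      Nat.pos_of_mul_pos_left (hdim ▸ Module.finrank_pos)
    have : Nontrivial B.fiber.toSubmodule := Module.finrank_pos_iff.mp hpos
    have hfiber := h.fiber B (hx j) hs hker
    refine or_iff_not_imp_left.mpr fun hsec => ⟨B, j, B.conjFamily (hx j) hker, ?_,
      B.conjFamily_pow (hx j) hker hx, hfiber, fun hfc => hsec ?_⟩
    · exact hdim ▸ lt_mul_of_one_lt_left hpos (Fact.out : p.Prime).one_lt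
    · exact B.hasSectionIsomorphicTo_of_commute_conjFamily (hx j) hker hp hx hs hfiber hfc
  · push Not at hker
    obtain ⟨i, hij, hi⟩ := hker
    obtain rfl := B.eq_two_of_disjoint_commutatorSpace (hx i) hi (hx j) hsj
      (h.iSupIndep.pairwiseDisjoint hij)
    push Not at hcomm
    obtain ⟨a, b, hab⟩ := hcomm
    exact .inl (hasSectionIsomorphicTo_wreathZpZp_two_of_not_commute hG (hx a) (hx b)
      fun hc => hab (hc.map ρ))

theorem hasSectionIsomorphicTo_of_isAlgClosed (hp : (p : K) ≠ 0) (hG : IsPGroup p G)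
    (hx : ∀ i, x i ^ p = 1) (h : IsCommutatorDecomposition ρ x)
    (hcomm : ¬ ∀ i j, Commute (ρ (x i)) (ρ (x j))) :
    HasSectionIsomorphicTo G (WreathZpZp p) := by
  induction hn : Module.finrank K V using Nat.strong_induction_on generalizing G V ι with
  | _ n ih =>
    let H := closure (Set.range x)
    have hH : IsPGroup p H := hG.to_subgroup H
    let y (i : ι) : H := ⟨x i, subset_closure ⟨i, rfl⟩⟩
    have hy (i : ι) : y i ^ p = 1 := Subtype.ext (hx i)
    have hyD : IsCommutatorDecomposition (ρ.comp H.subtype) y := ⟨h.iSupIndep, h.iSup_eq_top⟩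
    have hgen : closure (Set.range y) = ⊤ := by
      convert closure_closure_coe_preimage (k := Set.range x) using 2
      ext ⟨z, hz⟩
      simp [y, Subtype.ext_iff]
    have : NeZero (Nat.card H : K) := ⟨natCast_card_ne_zero_of_isPGroup hH hp⟩
    obtain ⟨σ, hirr, hσ, hσcomm⟩ := exists_isIrreducible_not_commute hyD hcomm
    refine .of_subgroup (H := H) ?_
    obtain hsec | ⟨B, j, z, hlt, hz, hzD, hzcomm⟩ :=
      hasSectionIsomorphicTo_or_exists_fiber hp hH hgen hy hσ hσcomm
    · exact hsec
    · refine .of_subgroup (ih _ ?_ (hH.to_subgroup _) hz hzD hzcomm rfl)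
      exact hn ▸ hlt.trans_le (Submodule.finrank_le _)

end AlgClosed

section ExtendScalars

open TensorProduct

theorem range_baseChange {R A M N : Type*} [CommRing R] [Ring A] [Algebra R A] [AddCommGroup M]
    [Module R M] [AddCommGroup N] [Module R N] (f : M →ₗ[R] N) :
    LinearMap.range (f.baseChange A) = (LinearMap.range f).baseChange A := by
  have hsurj : Function.Surjective (f.rangeRestrict.baseChange A) :=
    LinearMap.lTensor_surjective A f.surjective_rangeRestrict
  calc LinearMap.range (f.baseChange A)
    _ = LinearMap.range ((LinearMap.range f).subtype.baseChange A ∘ₗ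
          f.rangeRestrict.baseChange A) := by
      rw [← LinearMap.baseChange_comp]; rfl
    _ = (LinearMap.range f).baseChange A :=
      LinearMap.range_comp_of_range_eq_top _ (LinearMap.range_eq_top.mpr hsurj)

variable {K L G V ι : Type*} [Field K] [Field L] [Algebra K L] [Monoid G] [AddCommGroup V]
  [Module K V]

variable (L) in
/-- The representation on `L ⊗ V` induced by a representation on `V`, for a field extension `L`. -/
noncomputable def extendScalars (ρ : Representation K G V) : Representation L G (L ⊗[K] V) :=
  (Module.End.baseChangeHom K L V : Module.End K V →* Module.End L (L ⊗[K] V)).comp ρ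

theorem commutatorSpace_extendScalars (ρ : Representation K G V) (g : G) :
    commutatorSpace (extendScalars L ρ) g = (commutatorSpace ρ g).baseChange L := by
  have hsub : extendScalars L ρ g - LinearMap.id = (ρ g - LinearMap.id).baseChange L := by
    rw [LinearMap.baseChange_sub, LinearMap.baseChange_id]; rfl
  exact (congrArg LinearMap.range hsub).trans (range_baseChange _)

theorem IsCommutatorDecomposition.extendScalars {ρ : Representation K G V} {x : ι → G}
    (h : IsCommutatorDecomposition ρ x) :
    IsCommutatorDecomposition (extendScalars L ρ) x := by
  classical
  have hint := (DirectSum.isInternal_submodule_of_iSupIndep_of_iSup_eq_top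
    h.iSupIndep h.iSup_eq_top).baseChange (S := L)
  simp only [← commutatorSpace_extendScalars] at hint
  exact ⟨hint.submodule_iSupIndep, hint.submodule_iSup_eq_top⟩

theorem commute_extendScalars_iff {ρ : Representation K G V} {g h : G} :
    Commute (extendScalars L ρ g) (extendScalars L ρ h) ↔ Commute (ρ g) (ρ h) :=
  commute_map_iff (f := Module.End.baseChangeHom K L V) (LinearMap.baseChangeHom_injective K V L)

end ExtendScalars

theorem map_eq_one_of_mem_commutator {G M ι : Type*} [Group G] [Monoid M] (f : G →* M) {x : ι → G}
    (hgen : closure (Set.range x) = ⊤) (hcomm : ∀ i j, Commute (f (x i)) (f (x j))) {z : G}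
    (hz : z ∈ commutator G) : f z = 1 := by
  have hrange : f.toHomUnits.range = closure (f.toHomUnits '' Set.range x) := by
    rw [← MonoidHom.map_closure, hgen, MonoidHom.range_eq_map]
  have : IsMulCommutative f.toHomUnits.range := by
    rw [hrange]
    refine isMulCommutative_closure ?_
    rintro _ ⟨_, ⟨i, rfl⟩, rfl⟩ _ ⟨_, ⟨j, rfl⟩, rfl⟩
    exact Units.ext (hcomm i j)
  have hle : commutator G ≤ f.toHomUnits.ker := by
    rw [commutator_def, commutator_le]
    intro g _ h _
    rw [MonoidHom.mem_ker, map_commutatorElement, commutatorElement_eq_one_iff_mul_comm]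
    exact setLike_mul_comm (s := f.toHomUnits.range) ⟨g, rfl⟩ ⟨h, rfl⟩
  exact congrArg Units.val (hle hz)

theorem statement_8_general {p : ℕ} [Fact p.Prime] {k : Type*} [Field k] (hchar : ringChar k ≠ p)
    {P : Type*} [Group P] [Finite P] (hP : IsPGroup p P) {V : Type*} [AddCommGroup V] [Module k V]
    (ρ : Representation k P V) {ι : Type*} (x : ι → P) (hx : ∀ i, x i ^ p = 1)
    (h : IsCommutatorDecomposition ρ x) (hcomm : ¬ ∀ i j, Commute (ρ (x i)) (ρ (x j))) :
    HasSectionIsomorphicTo P (WreathZpZp p) := by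
  have hp : (p : k) ≠ 0 := fun h0 => hchar <|
    ((Nat.dvd_prime Fact.out).mp (ringChar.dvd h0)).resolve_left CharP.ringChar_ne_one
  have : NeZero (Nat.card P : k) := ⟨natCast_card_ne_zero_of_isPGroup hP hp⟩
  obtain ⟨σ, hirr, hσ, hσcomm⟩ := exists_isIrreducible_not_commute h hcomm
  have : FiniteDimensional k σ.toSubmodule :=
    finiteDimensional_of_isIrreducible (ρ := σ.toRepresentation)
  refine hasSectionIsomorphicTo_of_isAlgClosed (K := AlgebraicClosure k) ?_ hP hx
    hσ.extendScalars (by simpa only [commute_extendScalars_iff] using hσcomm)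
  rw [← map_natCast (algebraMap k (AlgebraicClosure k))]
  exact (map_ne_zero _).mpr hp

/-- If a finite `p`-group `P` (with `char k ≠ p`) acts irreducibly and nontrivially on
`⁅P,P⁆` on a `k`-vector space `V`, is generated by elements `x₁, …, x_s` of order `p`,
and `V = ⨁ᵢ [xᵢ, V]`, then `P` has a section isomorphic to `Z_p ≀ Z_p`. -/
theorem statement_8 {p : ℕ} [Fact p.Prime]
    {k : Type*} [Field k] (hchar : ringChar k ≠ p)
    {P : Type*} [Group P] [Fintype P] (hP : IsPGroup p P)
    {V : Type*} [AddCommGroup V] [Module k V] [FiniteDimensional k V]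
    (ρ : Representation k P V)
    (hV : Nontrivial V)
    (hirr : ∀ U : Submodule k V, (∀ g : P, ∀ v ∈ U, ρ g v ∈ U) → U = ⊥ ∨ U = ⊤)
    (hcomm : ¬ ∀ z ∈ commutator P, ρ z = LinearMap.id)
    {s : ℕ} (x : Fin s → P)
    (hgen : Subgroup.closure (Set.range x) = ⊤)
    (hord : ∀ j : Fin s, orderOf (x j) = p)
    (hsum : DirectSum.IsInternal
      (fun i : Fin s => LinearMap.range (ρ (x i) - LinearMap.id))) :
    HasSectionIsomorphicTo P (WreathZpZp p) := by
  exact statement_8_general hchar hP ρ x (fun i => hord i ▸ pow_orderOf_eq_one (x i))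
    ⟨hsum.submodule_iSupIndep, hsum.submodule_iSup_eq_top⟩
    fun h => hcomm fun _ => map_eq_one_of_mem_commutator ρ hgen h
end

section
/- Let F be a finite field of odd characteristic with q = |F| elements, let n ≥ 3, and let V be an n-dimensional F-vector space equipped with a nondegenerate symmetric bilinear form B. Let G be the group of isometries of B (invertible linear maps f of V with B(f v, f w) = B(v,w) for all v, w ∈ V). Let x, y ∈ G be reflections, i.e. x² = 1 and the fixed space of x has dimension n−1, and likewise for y, and assume x and y are not conjugate in G. Then the subgroup ⟨x, g⁻¹yg⟩ is a 2-group for all g ∈ G if and only if q = 3. -/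
/-- The fixed-point subspace of a linear automorphism `f` of `V`. -/
def fixedSpace {F V : Type*} [Field F] [AddCommGroup V] [Module F V]
    (f : V ≃ₗ[F] V) : Submodule F V :=
  LinearMap.ker (f.toLinearMap - LinearMap.id)

/-- The group of isometries of a bilinear form `B` on `V`: all invertible linear maps
`f : V → V` with `B (f v) (f w) = B v w` for all `v, w`. -/
def isometryGroup {F V : Type*} [Field F] [AddCommGroup V] [Module F V]
    (B : V →ₗ[F] V →ₗ[F] F) : Subgroup (V ≃ₗ[F] V) where
  carrier := {f | ∀ v w : V, B (f v) (f w) = B v w}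
  one_mem' := fun _ _ => rfl
  mul_mem' := by
    intro a b ha hb v w
    show B (a (b v)) (a (b w)) = B v w
    rw [ha, hb]
  inv_mem' := by
    intro a ha v w
    show B (a.symm v) (a.symm w) = B v w
    rw [← ha (a.symm v) (a.symm w), a.apply_symm_apply, a.apply_symm_apply]

/- Every reflection is the reflection `r a` along an anisotropic vector `a`, and `r a`, `r b` are
conjugate if `B a a * B b b` is a square. The product `r a * r c` acts on the plane spanned by `a`
and `c` with determinant `1` and trace `t = 4 * B a c ^ 2 / (B a a * B c c) - 2`. Squaring an
element of determinant `1` turns the trace `t` into `t ^ 2 - 2`, which multiplies `4 - t ^ 2` by a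
square; as `4 - t ^ 2 = 0` for the identity, `r a * r c` cannot have `2`-power order when
`4 - t ^ 2` is not a square. Up to squares, `4 - t ^ 2` is the Gram determinant of `a` and `c`
unless `B a c = 0`. For `q ≠ 3` a suitable `c` exists because the orthogonal complement of `a`
represents every scalar, while for `q = 3` the only possibilities are `B a c = 0` and `t = 0`,
where `(r a * r c) ^ 4 = 1`. -/

section Group

variable {G : Type*} [Group G]

theorem isPGroup_zpowers_of_pow_eq_one {p n : ℕ} {g : G} (hg : g ^ p ^ n = 1) :
    IsPGroup p (Subgroup.zpowers g) := by
  rintro ⟨_, k, rfl⟩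
  refine ⟨n, Subtype.ext ?_⟩
  change (g ^ k) ^ p ^ n = 1
  rw [← zpow_natCast, zpow_comm, zpow_natCast, hg, one_zpow]

theorem isPGroup_two_closure_pair {x z : G} {n : ℕ} (hx : x ^ 2 = 1) (hz : z ^ 2 = 1)
    (hxz : (x * z) ^ 2 ^ n = 1) : IsPGroup 2 (Subgroup.closure {x, z}) := by
  have hx_inv : x⁻¹ = x := inv_eq_of_mul_eq_one_right (by rw [← pow_two, hx])
  have hz_inv : z⁻¹ = z := inv_eq_of_mul_eq_one_right (by rw [← pow_two, hz])
  have hconj : x * (x * z) * x⁻¹ = (x * z)⁻¹ := by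
    rw [mul_inv_rev, hx_inv, hz_inv, ← mul_assoc, ← pow_two, hx, one_mul]
  have hnormalizer : Subgroup.zpowers x ≤ Subgroup.normalizer (Subgroup.zpowers (x * z)) := by
    rw [Subgroup.zpowers_le, Subgroup.mem_normalizer_iff_map_conj_eq, MonoidHom.map_zpowers,
      ← Subgroup.zpowers_inv (g := x * z), ← hconj]
    rfl
  have hx_group : IsPGroup 2 (Subgroup.zpowers x) :=
    isPGroup_zpowers_of_pow_eq_one (n := 1) (by rw [pow_one, hx])
  have hsup := hx_group.to_sup_of_normal_right' (isPGroup_zpowers_of_pow_eq_one hxz) hnormalizer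
  refine hsup.to_le ((Subgroup.closure_le _).2 ?_)
  have hx_mem : x ∈ Subgroup.zpowers x ⊔ Subgroup.zpowers (x * z) :=
    Subgroup.mem_sup_left (Subgroup.mem_zpowers x)
  have hxz_mem : x * z ∈ Subgroup.zpowers x ⊔ Subgroup.zpowers (x * z) :=
    Subgroup.mem_sup_right (Subgroup.mem_zpowers _)
  rintro _ (rfl | rfl)
  · exact hx_mem
  · exact (Subgroup.mul_mem_cancel_left _ hx_mem).1 hxz_mem

end Group

section Field

variable {F : Type*} [Field F]

theorem isSquare_neg_one_of_isSquare_one_sub_sq {v : F} (hv₀ : v ≠ 0) (hv₁ : v ^ 2 ≠ 1)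
    (hv : IsSquare (1 - v ^ 2)) (hv_inv : IsSquare (1 - v⁻¹ ^ 2)) : IsSquare (-1 : F) := by
  obtain ⟨r, hr⟩ := hv
  obtain ⟨s, hs⟩ := hv_inv
  have hr₀ : r ≠ 0 := by
    rintro rfl
    exact hv₁ (by linear_combination -hr)
  refine ⟨s * v / r, ?_⟩
  field_simp at hs ⊢
  linear_combination hs + hr

theorem exists_not_isSquare_one_sub_sq [NeZero (2 : F)] {v δ : F} (hv₀ : v ≠ 0) (hv₁ : v ^ 2 ≠ 1)
    (hδ : ¬IsSquare δ) : ∃ s : F, ¬IsSquare (1 - s ^ 2) := by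
  by_contra! h
  have hneg : IsSquare (-1 : F) :=
    isSquare_neg_one_of_isSquare_one_sub_sq hv₀ hv₁ (h v) (h v⁻¹)
  have hsub (u w : F) : IsSquare (u ^ 2 - w ^ 2) := by
    by_cases hu : u = 0
    · rw [hu, show (0 : F) ^ 2 - w ^ 2 = -1 * w ^ 2 by ring]
      exact hneg.mul (.sq w)
    · rw [show u ^ 2 - w ^ 2 = u ^ 2 * (1 - (w / u) ^ 2) by field_simp]
      exact (IsSquare.sq u).mul (h _)
  refine hδ ?_
  rw [show δ = ((δ + 1) / 2) ^ 2 - ((δ - 1) / 2) ^ 2 by field_simp; ring]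
  exact hsub _ _

end Field

section FiniteField

variable {F : Type*} [Field F]

theorem isSquare_mul_of_not_isSquare [Finite F] {a b : F} (ha : ¬IsSquare a) (hb : ¬IsSquare b) :
    IsSquare (a * b) := by
  classical
  have := Fintype.ofFinite F
  have hab : a * b ≠ 0 :=
    mul_ne_zero (fun h => ha (h ▸ IsSquare.zero)) fun h => hb (h ▸ IsSquare.zero)
  rw [← quadraticChar_one_iff_isSquare hab, map_mul,
    quadraticChar_neg_one_iff_not_isSquare.2 ha, quadraticChar_neg_one_iff_not_isSquare.2 hb,
    neg_mul_neg, one_mul]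

theorem exists_ne_zero_sq_ne_one [Fintype F] (hF : ringChar F ≠ 2) (h3 : Fintype.card F ≠ 3) :
    ∃ v : F, v ≠ 0 ∧ v ^ 2 ≠ 1 := by
  classical
  by_contra! h
  have hle : Fintype.card F ≤ ({0, 1, -1} : Finset F).card :=
    Finset.card_le_card fun v _ => by
      by_cases hv : v = 0
      · simp [hv]
      · simpa [hv] using h v hv
  have := Finset.card_le_three (a := (0 : F)) (b := 1) (c := -1)
  have := FiniteField.odd_card_of_char_ne_two hF
  have := Fintype.one_lt_card (α := F)
  omega

theorem sq_eq_one_of_card_eq_three [Fintype F] (h3 : Fintype.card F = 3) {x : F} (hx : x ≠ 0) :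
    x ^ 2 = 1 := by
  simpa [h3] using FiniteField.pow_card_sub_one_eq_one x hx

theorem exists_ne_zero_not_isSquare_sub_sq [Fintype F] (hF : ringChar F ≠ 2)
    (h3 : Fintype.card F ≠ 3) {δ : F} (hδ : ¬IsSquare δ) :
    ∃ β : F, β ≠ 0 ∧ ¬IsSquare (δ - β ^ 2) := by
  have : NeZero (2 : F) := ⟨Ring.two_ne_zero hF⟩
  obtain ⟨v, hv₀, hv₁⟩ := exists_ne_zero_sq_ne_one hF h3
  obtain ⟨s, hs⟩ := exists_not_isSquare_one_sub_sq hv₀ hv₁ hδ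
  have hs₀ : s ≠ 0 := by
    rintro rfl
    exact hs (by simp)
  obtain ⟨β, hβ⟩ := isSquare_mul_of_not_isSquare hδ hs
  refine ⟨β, ?_, ?_⟩
  · rintro rfl
    have hδ₀ : δ ≠ 0 := fun h => hδ (h ▸ IsSquare.zero)
    have : 1 - s ^ 2 = 0 := by simpa [hδ₀] using hβ
    exact hs (this ▸ IsSquare.zero)
  · rintro ⟨r, hr⟩
    refine hδ ⟨r / s, ?_⟩
    field_simp
    linear_combination hr - hβ

theorem exists_mul_sq_add_mul_sq_eq [Finite F] (hF : ringChar F ≠ 2) {d e : F} (hd : d ≠ 0)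
    (he : e ≠ 0) (γ : F) : ∃ u v : F, d * u ^ 2 + e * v ^ 2 = γ := by
  have := Fintype.ofFinite F
  open Polynomial in
  obtain ⟨u, v, h⟩ := FiniteField.exists_root_sum_quadratic
    (f := C d * X ^ 2 + C 0 * X + C (-γ)) (g := C e * X ^ 2 + C 0 * X + C 0)
    (degree_quadratic hd) (degree_quadratic he) (FiniteField.odd_card_of_char_ne_two hF)
  simp only [Polynomial.eval_add, Polynomial.eval_mul, Polynomial.eval_C, Polynomial.eval_pow,
    Polynomial.eval_X] at h
  exact ⟨u, v, by linear_combination h⟩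

variable [Finite F] {V : Type*} [AddCommGroup V] [Module F V] [FiniteDimensional F V]
  {B : LinearMap.BilinForm F V}

theorem exists_apply_self_eq (hF : ringChar F ≠ 2) (hB : B.IsSymm) (hnd : B.Nondegenerate)
    (hdim : 2 ≤ Module.finrank F V) (γ : F) : ∃ v, B v v = γ := by
  have : Invertible (2 : F) := invertibleOfNonzero (Ring.two_ne_zero hF)
  obtain ⟨e, he⟩ := LinearMap.BilinForm.exists_orthogonal_basis
    (LinearMap.BilinForm.isSymm_iff.1 hB)
  have hne := he.not_isOrtho_basis_self_of_separatingLeft hnd.1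
  let i : Fin (Module.finrank F V) := ⟨0, by omega⟩
  let j : Fin (Module.finrank F V) := ⟨1, by omega⟩
  have hij : B (e i) (e j) = 0 := he (by simp [i, j])
  obtain ⟨u, v, huv⟩ := exists_mul_sq_add_mul_sq_eq hF (hne i) (hne j) γ
  refine ⟨u • e i + v • e j, ?_⟩
  simp only [map_add, map_smul, LinearMap.add_apply, LinearMap.smul_apply, smul_eq_mul, hij,
    hB.eq (e j) (e i)]
  linear_combination huv

theorem exists_apply_eq_apply_self_eq (hF : ringChar F ≠ 2) (hB : B.IsSymm) (hnd : B.Nondegenerate)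
    (hdim : 3 ≤ Module.finrank F V) {a : V} (ha : B a a ≠ 0) (β γ : F) :
    ∃ c, B a c = β ∧ B c c = γ := by
  have hW : 2 ≤ Module.finrank F (B.orthogonal (F ∙ a)) := by
    rw [LinearMap.BilinForm.finrank_orthogonal hnd,
      finrank_span_singleton (LinearMap.BilinForm.ne_zero_of_not_isOrtho_self a ha)]
    omega
  obtain ⟨⟨w, hw⟩, hww⟩ := exists_apply_self_eq hF (hB.restrict _)
    (LinearMap.BilinForm.restrict_nondegenerate_orthogonal_spanSingleton B hnd hB.isRefl ha) hW
    (γ - β ^ 2 / B a a)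
  replace hww : B w w = γ - β ^ 2 / B a a := hww
  have haw : B a w = 0 :=
    LinearMap.BilinForm.mem_orthogonal_iff.1 hw a (Submodule.mem_span_singleton_self a)
  refine ⟨(β / B a a) • a + w, ?_, ?_⟩
  · simp [haw, ha]
  · simp only [map_add, map_smul, LinearMap.add_apply, LinearMap.smul_apply, smul_eq_mul, haw,
      hB.eq w a, hww]
    field_simp
    ring

end FiniteField

section Reflection

variable {F V : Type*} [Field F] [AddCommGroup V] [Module F V] {B : LinearMap.BilinForm F V}

theorem apply_smul_smul (g : isometryGroup B) (v w : V) : B (g • v) (g • w) = B v w :=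
  g.2 v w

theorem mem_fixedSpace_iff {g : isometryGroup B} {v : V} :
    v ∈ fixedSpace (g : V ≃ₗ[F] V) ↔ g • v = v := by
  rw [fixedSpace, LinearMap.mem_ker, LinearMap.sub_apply, sub_eq_zero]
  rfl

/-- The reflection `v ↦ v - 2 B(a,v)/B(a,a) a` in the hyperplane orthogonal to `a`, as an isometry.
It is the identity when `a` is isotropic, by the convention `x / 0 = 0`. -/
def orthogonalReflection (hB : B.IsSymm) (a : V) : isometryGroup B where
  val := LinearEquiv.ofInvolutive (LinearMap.id - (2 / B a a) • (B a).smulRight a) fun v => by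
    by_cases ha : B a a = 0
    · simp [ha]
    · simp only [LinearMap.sub_apply, LinearMap.id_apply, LinearMap.smul_apply,
        LinearMap.smulRight_apply, map_sub, map_smul]
      match_scalars
      · ring
      · field_simp
        ring
  property v w := by
    by_cases ha : B a a = 0
    · simp [ha]
    · change B (v - (2 / B a a) • B a v • a) (w - (2 / B a a) • B a w • a) = B v w
      simp only [map_sub, map_smul, LinearMap.sub_apply, LinearMap.smul_apply, smul_eq_mul,
        hB.eq v a]
      field_simp
      ring

theorem orthogonalReflection_smul (hB : B.IsSymm) (a v : V) :
    orthogonalReflection hB a • v = v - (2 * B a v / B a a) • a := by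
  change v - (2 / B a a) • B a v • a = _
  rw [smul_smul, div_mul_eq_mul_div]

theorem orthogonalReflection_pow_two (hB : B.IsSymm) (a : V) :
    orthogonalReflection hB a ^ 2 = 1 := by
  rw [pow_two]
  exact mul_inv_cancel (orthogonalReflection hB a)

theorem orthogonalReflection_smul_vector (hB : B.IsSymm) {k : F} (hk : k ≠ 0) (a : V) :
    orthogonalReflection hB (k • a) = orthogonalReflection hB a := by
  refine eq_of_smul_eq_smul fun v : V => ?_
  simp only [orthogonalReflection_smul, map_smul, LinearMap.smul_apply, smul_eq_mul, smul_smul]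
  congr 2
  field_simp

theorem conj_orthogonalReflection (hB : B.IsSymm) (g : isometryGroup B) (a : V) :
    g * orthogonalReflection hB a * g⁻¹ = orthogonalReflection hB (g • a) := by
  refine eq_of_smul_eq_smul fun v : V => ?_
  have hv : B a (g⁻¹ • v) = B (g • a) v := by rw [← apply_smul_smul g, smul_inv_smul]
  rw [mul_smul, mul_smul, orthogonalReflection_smul, orthogonalReflection_smul, smul_sub,
    smul_inv_smul, smul_comm, apply_smul_smul, hv]

theorem orthogonalReflection_sub_smul (hB : B.IsSymm) {b c : V} (hbc : B b b = B c c)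
    (h : B (b - c) (b - c) ≠ 0) : orthogonalReflection hB (b - c) • b = c := by
  have hcoeff : 2 * B (b - c) b / B (b - c) (b - c) = 1 := by
    rw [div_eq_one_iff_eq h]
    simp only [map_sub, LinearMap.sub_apply]
    linear_combination hbc - hB.eq c b
  rw [orthogonalReflection_smul, hcoeff, one_smul, sub_sub_cancel]

theorem orthogonalReflection_smul_self (hB : B.IsSymm) {a : V} (ha : B a a ≠ 0) :
    orthogonalReflection hB a • a = -a := by
  rw [orthogonalReflection_smul, mul_div_cancel_right₀ _ ha, two_smul, sub_add_cancel_left]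

theorem exists_smul_eq_of_apply_self_eq [NeZero (2 : F)] (hB : B.IsSymm) {b c : V} (hb : B b b ≠ 0)
    (hbc : B b b = B c c) : ∃ g : isometryGroup B, g • b = c := by
  by_cases h : B (b - c) (b - c) = 0
  · have hadd : B (b - -c) (b - -c) = 2 * 2 * B b b := by
      simp only [map_sub, map_neg, LinearMap.sub_apply, LinearMap.neg_apply] at h ⊢
      linear_combination -h - 2 * hbc
    have hadd₀ : B (b - -c) (b - -c) ≠ 0 :=
      hadd ▸ mul_ne_zero (mul_ne_zero two_ne_zero two_ne_zero) hb
    refine ⟨orthogonalReflection hB c * orthogonalReflection hB (b - -c), ?_⟩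
    rw [mul_smul, orthogonalReflection_sub_smul hB (by simpa using hbc) hadd₀, smul_neg,
      orthogonalReflection_smul_self hB (hbc ▸ hb), neg_neg]
  · exact ⟨_, orthogonalReflection_sub_smul hB hbc h⟩

theorem isConj_orthogonalReflection_of_isSquare [NeZero (2 : F)] (hB : B.IsSymm) {a b : V}
    (ha : B a a ≠ 0) (hb : B b b ≠ 0) (hab : IsSquare (B a a * B b b)) :
    IsConj (orthogonalReflection hB a) (orthogonalReflection hB b) := by
  obtain ⟨s, hs⟩ := hab
  have hs₀ : s ≠ 0 := by
    rintro rfl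
    exact mul_ne_zero ha hb (by simpa using hs)
  have hk : s / B b b ≠ 0 := div_ne_zero hs₀ hb
  have hnorm : B a a = B ((s / B b b) • b) ((s / B b b) • b) := by
    simp only [map_smul, LinearMap.smul_apply, smul_eq_mul]
    field_simp
    linear_combination hs
  obtain ⟨g, hg⟩ := exists_smul_eq_of_apply_self_eq hB ha hnorm
  refine isConj_iff.2 ⟨g, ?_⟩
  rw [conj_orthogonalReflection, hg, orthogonalReflection_smul_vector hB hk]

theorem exists_ne_zero_smul_eq_neg {x : isometryGroup B} (hx : x ^ 2 = 1) (hx₁ : x ≠ 1) :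
    ∃ a : V, a ≠ 0 ∧ x • a = -a := by
  obtain ⟨v, hv⟩ : ∃ v : V, x • v ≠ v := by
    by_contra! h
    exact hx₁ (eq_of_smul_eq_smul fun v : V => by rw [h, one_smul])
  refine ⟨x • v - v, sub_ne_zero.2 hv, ?_⟩
  rw [smul_sub, smul_smul, ← pow_two, hx, one_smul, neg_sub]

variable [FiniteDimensional F V]

theorem fixedSpace_eq_ker_of_smul_eq_neg [NeZero (2 : F)] (hnd : B.SeparatingLeft)
    {x : isometryGroup B} {a : V} (ha : a ≠ 0) (hxa : x • a = -a)
    (hfix : Module.finrank F (fixedSpace (x : V ≃ₗ[F] V)) + 1 = Module.finrank F V) :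
    fixedSpace (x : V ≃ₗ[F] V) = LinearMap.ker (B a) := by
  have hle : fixedSpace (x : V ≃ₗ[F] V) ≤ LinearMap.ker (B a) := by
    intro w hw
    have h := apply_smul_smul x a w
    rw [hxa, mem_fixedSpace_iff.1 hw, map_neg, LinearMap.neg_apply] at h
    have h2 : 2 * B a w = 0 := by linear_combination -h
    exact (mul_eq_zero.1 h2).resolve_left two_ne_zero
  have hlt : Module.finrank F (LinearMap.ker (B a)) < Module.finrank F V :=
    Submodule.finrank_lt fun h => ha (hnd a fun w => by
      rw [LinearMap.ker_eq_top.1 h, LinearMap.zero_apply])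
  exact Submodule.eq_of_le_of_finrank_le hle (by omega)

theorem exists_eq_orthogonalReflection [NeZero (2 : F)] (hB : B.IsSymm) (hnd : B.SeparatingLeft)
    {x : isometryGroup B} (hx : x ^ 2 = 1)
    (hfix : Module.finrank F (fixedSpace (x : V ≃ₗ[F] V)) + 1 = Module.finrank F V) :
    ∃ a, B a a ≠ 0 ∧ x = orthogonalReflection hB a := by
  have hx₁ : x ≠ 1 := by
    rintro rfl
    have : fixedSpace ((1 : isometryGroup B) : V ≃ₗ[F] V) = ⊤ :=
      eq_top_iff.2 fun v _ => mem_fixedSpace_iff.2 (one_smul _ v)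
    rw [this, finrank_top] at hfix
    omega
  obtain ⟨a, ha, hxa⟩ := exists_ne_zero_smul_eq_neg hx hx₁
  have hfixed {w : V} (hw : B a w = 0) : x • w = w :=
    mem_fixedSpace_iff.1 (fixedSpace_eq_ker_of_smul_eq_neg hnd ha hxa hfix ▸ hw)
  have haa : B a a ≠ 0 := fun h => by
    have h2 : (2 : F) • a = 0 := by
      rw [two_smul]
      nth_rewrite 1 [← hfixed h]
      rw [hxa, neg_add_cancel]
    exact smul_ne_zero two_ne_zero ha h2
  refine ⟨a, haa, eq_of_smul_eq_smul fun v : V => ?_⟩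
  have hproj : x • (v - (B a v / B a a) • a) = v - (B a v / B a a) • a :=
    hfixed (by simp [haa])
  rw [smul_sub, smul_comm x, hxa] at hproj
  rw [orthogonalReflection_smul]
  generalize x • v = xv at hproj ⊢
  linear_combination (norm := module) hproj

end Reflection

section Product

variable {F V : Type*} [Field F] [AddCommGroup V] [Module F V]

theorem pow_two_pow_ne_one_of_smul_smul_add_eq {M : Type*} [Monoid M] [DistribMulAction M V]
    [SMulCommClass M F V] {v : V} (hv : v ≠ 0) {g : M} {t : F} (ht : ¬IsSquare (4 - t ^ 2))
    (hg : g • g • v + v = t • g • v) (k : ℕ) : g ^ 2 ^ k ≠ 1 := by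
  induction k generalizing g t with
  | zero =>
    intro h
    rw [pow_zero, pow_one] at h
    rw [h, one_smul, one_smul] at hg
    have h2 : (2 - t) • v = 0 := by linear_combination (norm := module) hg
    have ht2 : t = 2 := (sub_eq_zero.1 ((smul_eq_zero.1 h2).resolve_right hv)).symm
    exact ht ⟨0, by rw [ht2]; ring⟩
  | succ k ih =>
    have ht₀ : t ≠ 0 := by
      rintro rfl
      exact ht ⟨2, by ring⟩
    have hsq : ¬IsSquare (4 - (t ^ 2 - 2) ^ 2) := by
      rintro ⟨r, hr⟩
      refine ht ⟨r / t, ?_⟩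
      field_simp
      linear_combination hr
    rw [pow_succ', pow_mul]
    refine ih hsq ?_
    have hg₁ := congrArg (g • ·) hg
    have hg₂ := congrArg (g • g • ·) hg
    simp only [smul_add, smul_comm g t] at hg₁ hg₂
    rw [pow_two, mul_smul, mul_smul]
    generalize g • g • g • g • v = v₄ at *
    generalize g • g • g • v = v₃ at *
    generalize g • g • v = v₂ at *
    generalize g • v = v₁ at *
    linear_combination (norm := module) hg₂ + t • hg₁ + hg

/-- The trace of the product of the reflections along `a` and `c` on the plane spanned by `a` and
`c`, when these are anisotropic and linearly independent. -/
def reflectionProductTrace (B : LinearMap.BilinForm F V) (a c : V) : F :=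
  4 * B a c ^ 2 / (B a a * B c c) - 2

variable {B : LinearMap.BilinForm F V}

theorem orthogonalReflection_mul_smul_smul_add (hB : B.IsSymm) {a c w : V} (ha : B a a ≠ 0)
    (hc : B c c ≠ 0) (hw : w ∈ Submodule.span F {a, c}) :
    (orthogonalReflection hB a * orthogonalReflection hB c) •
        (orthogonalReflection hB a * orthogonalReflection hB c) • w + w =
      reflectionProductTrace B a c •
        (orthogonalReflection hB a * orthogonalReflection hB c) • w := by
  obtain ⟨k, l, rfl⟩ := Submodule.mem_span_pair.1 hw
  simp only [mul_smul, orthogonalReflection_smul, reflectionProductTrace, map_sub, map_add,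
    map_smul, smul_eq_mul, hB.eq c a]
  match_scalars <;> field_simp <;> ring

theorem orthogonalReflection_mul_smul_sub_mem_span (hB : B.IsSymm) (a c v : V) :
    (orthogonalReflection hB a * orthogonalReflection hB c) • v - v ∈ Submodule.span F {a, c} := by
  have ha : a ∈ Submodule.span F {a, c} := Submodule.subset_span (by simp)
  have hc : c ∈ Submodule.span F {a, c} := Submodule.subset_span (by simp)
  rw [mul_smul, orthogonalReflection_smul hB a, orthogonalReflection_smul hB c,
    sub_right_comm, sub_sub_cancel_left]
  exact sub_mem (neg_mem (Submodule.smul_mem _ _ hc)) (Submodule.smul_mem _ _ ha)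

theorem orthogonalReflection_mul_pow_four (hB : B.IsSymm) {a c : V} (ha : B a a ≠ 0)
    (hc : B c c ≠ 0) (h : reflectionProductTrace B a c = 0) :
    (orthogonalReflection hB a * orthogonalReflection hB c) ^ 4 = 1 := by
  refine eq_of_smul_eq_smul fun v : V => ?_
  set P := orthogonalReflection hB a * orthogonalReflection hB c
  have hw : P • P • (P • v - v) + (P • v - v) = 0 := by
    rw [orthogonalReflection_mul_smul_smul_add hB ha hc
      (orthogonalReflection_mul_smul_sub_mem_span hB a c v), h, zero_smul]
  have hPw := congrArg (P • ·) hw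
  simp only [smul_add, smul_sub, smul_zero] at hw hPw
  simp only [pow_succ, pow_zero, one_mul, mul_smul, one_smul]
  generalize P • P • P • P • v = v₄ at *
  generalize P • P • P • v = v₃ at *
  generalize P • P • v = v₂ at *
  generalize P • v = v₁ at *
  linear_combination (norm := module) hPw + hw

theorem orthogonalReflection_commute (hB : B.IsSymm) {a c : V} (hac : B a c = 0) :
    Commute (orthogonalReflection hB a) (orthogonalReflection hB c) := by
  refine eq_of_smul_eq_smul fun v : V => ?_
  simp only [mul_smul, orthogonalReflection_smul, map_sub, map_smul, hac, hB.eq c a, smul_zero,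
    sub_zero]
  exact sub_right_comm _ _ _

theorem not_isPGroup_closure_orthogonalReflection [NeZero (2 : F)] (hB : B.IsSymm) {a c : V}
    (ha : B a a ≠ 0) (hc : B c c ≠ 0) (hac : B a c ≠ 0)
    (hgram : ¬IsSquare (B a a * B c c - B a c ^ 2)) :
    ¬IsPGroup 2 (Subgroup.closure {orthogonalReflection hB a, orthogonalReflection hB c}) := by
  have htrace : ¬IsSquare (4 - reflectionProductTrace B a c ^ 2) := by
    rintro ⟨s, hs⟩
    refine hgram ⟨s * (B a a * B c c) / (2 * 2 * B a c), ?_⟩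
    rw [reflectionProductTrace] at hs
    field_simp at hs ⊢
    linear_combination hs
  intro h
  obtain ⟨k, hk⟩ := h ⟨orthogonalReflection hB a * orthogonalReflection hB c,
    mul_mem (Subgroup.subset_closure (by simp)) (Subgroup.subset_closure (by simp))⟩
  exact pow_two_pow_ne_one_of_smul_smul_add_eq
    (LinearMap.BilinForm.ne_zero_of_not_isOrtho_self a ha) htrace
    (orthogonalReflection_mul_smul_smul_add hB ha hc (Submodule.subset_span (by simp))) k
    (congrArg Subtype.val hk)

variable [Fintype F]

theorem exists_not_isPGroup_closure_orthogonalReflection [FiniteDimensional F V]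
    (hF : ringChar F ≠ 2) (h3 : Fintype.card F ≠ 3) (hB : B.IsSymm) (hnd : B.Nondegenerate)
    (hdim : 3 ≤ Module.finrank F V) {a : V} {γ : F} (hγ : ¬IsSquare (B a a * γ)) :
    ∃ c, B c c = γ ∧
      ¬IsPGroup 2 (Subgroup.closure {orthogonalReflection hB a, orthogonalReflection hB c}) := by
  have : NeZero (2 : F) := ⟨Ring.two_ne_zero hF⟩
  have hne : B a a * γ ≠ 0 := fun h => hγ (h ▸ IsSquare.zero)
  obtain ⟨β, hβ, hgram⟩ := exists_ne_zero_not_isSquare_sub_sq hF h3 hγ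
  obtain ⟨c, rfl, rfl⟩ := exists_apply_eq_apply_self_eq hF hB hnd hdim (left_ne_zero_of_mul hne) β γ
  exact ⟨c, rfl, not_isPGroup_closure_orthogonalReflection hB (left_ne_zero_of_mul hne)
    (right_ne_zero_of_mul hne) hβ hgram⟩

theorem reflectionProductTrace_eq_zero_of_card_eq_three (h3 : Fintype.card F = 3) {a c : V}
    (hac : B a c ≠ 0) (hnorm : ¬IsSquare (B a a * B c c)) : reflectionProductTrace B a c = 0 := by
  have hchar : (3 : F) = 0 := by exact_mod_cast h3 ▸ Nat.cast_card_eq_zero F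
  have hne : B a a * B c c ≠ 0 := fun h => hnorm (h ▸ IsSquare.zero)
  have hnorm_eq : B a a * B c c = -1 :=
    (sq_eq_one_iff.1 (sq_eq_one_of_card_eq_three h3 hne)).resolve_left
      fun h => hnorm (h ▸ IsSquare.one)
  rw [reflectionProductTrace, hnorm_eq, sq_eq_one_of_card_eq_three h3 hac]
  linear_combination -2 * hchar

theorem isPGroup_closure_orthogonalReflection_of_card_eq_three (h3 : Fintype.card F = 3)
    (hB : B.IsSymm) {a c : V} (hac : ¬IsSquare (B a a * B c c)) :
    IsPGroup 2 (Subgroup.closure {orthogonalReflection hB a, orthogonalReflection hB c}) := by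
  have hne : B a a * B c c ≠ 0 := fun h => hac (h ▸ IsSquare.zero)
  refine isPGroup_two_closure_pair (n := 2) (orthogonalReflection_pow_two hB a)
    (orthogonalReflection_pow_two hB c) ?_
  by_cases h : B a c = 0
  · rw [(orthogonalReflection_commute hB h).mul_pow, pow_two 2, pow_mul, pow_mul,
      orthogonalReflection_pow_two, orthogonalReflection_pow_two, one_pow, one_mul]
  · exact orthogonalReflection_mul_pow_four hB (left_ne_zero_of_mul hne) (right_ne_zero_of_mul hne)
      (reflectionProductTrace_eq_zero_of_card_eq_three h3 h hac)

end Product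

/-- **Non-conjugate reflections in finite orthogonal groups.**
Let `V` be an `n`-dimensional vector space, `n ≥ 3`, over a finite field `F` of odd
characteristic, with a nondegenerate symmetric bilinear form `B`, and let `G` be the
isometry group of `B`. If `x, y ∈ G` are non-conjugate reflections, then `⟨x, g⁻¹yg⟩`
is a 2-group for all `g ∈ G` if and only if `|F| = 3`. -/
theorem statement_11 {F : Type*} [Field F] [Fintype F] (hodd : Odd (ringChar F))
    {V : Type*} [AddCommGroup V] [Module F V] [FiniteDimensional F V]
    (n : ℕ) (hn : 3 ≤ n) (hdim : Module.finrank F V = n)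
    (B : V →ₗ[F] V →ₗ[F] F)
    (hsymm : ∀ v w : V, B v w = B w v)
    (hnondeg : ∀ v : V, (∀ w : V, B v w = 0) → v = 0)
    (x y : ↥(isometryGroup B))
    (hx2 : x ^ 2 = 1)
    (hxfix : Module.finrank F (fixedSpace (x : V ≃ₗ[F] V)) = n - 1)
    (hy2 : y ^ 2 = 1)
    (hyfix : Module.finrank F (fixedSpace (y : V ≃ₗ[F] V)) = n - 1)
    (hconj : ¬ IsConj x y) :
    (∀ g : ↥(isometryGroup B), IsPGroup 2 ↥(Subgroup.closure {x, g⁻¹ * y * g})) ↔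
      Fintype.card F = 3 := by
  have hF : ringChar F ≠ 2 := fun h => absurd (h ▸ hodd) (by decide)
  have : NeZero (2 : F) := ⟨Ring.two_ne_zero hF⟩
  have hB : LinearMap.BilinForm.IsSymm B := ⟨hsymm⟩
  have hnd : LinearMap.BilinForm.Nondegenerate B :=
    hB.isRefl.nondegenerate_iff_separatingLeft.2 hnondeg
  obtain ⟨a, ha, rfl⟩ := exists_eq_orthogonalReflection hB hnondeg hx2 (by omega)
  obtain ⟨b, hb, rfl⟩ := exists_eq_orthogonalReflection hB hnondeg hy2 (by omega)
  have hab : ¬IsSquare (B a a * B b b) :=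
    mt (isConj_orthogonalReflection_of_isSquare hB ha hb) hconj
  have hconj_inv (g : isometryGroup B) :
      g⁻¹ * orthogonalReflection hB b * g = orthogonalReflection hB (g⁻¹ • b) := by
    simpa using conj_orthogonalReflection hB g⁻¹ b
  constructor
  · intro h
    by_contra h3
    obtain ⟨c, hc, hnot⟩ :=
      exists_not_isPGroup_closure_orthogonalReflection hF h3 hB hnd (hdim ▸ hn) hab
    obtain ⟨g, rfl⟩ := exists_smul_eq_of_apply_self_eq hB hb hc.symm
    have hg := h g⁻¹
    rw [hconj_inv, inv_inv] at hg
    exact hnot hg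
  · intro h3 g
    rw [hconj_inv]
    refine isPGroup_closure_orthogonalReflection_of_card_eq_three h3 hB ?_
    rwa [apply_smul_smul]
end

section
/- Let G be a finite group, p a prime, and x ∈ G a nontrivial p-element such that for every maximal subgroup M of G containing x, the element x belongs to every Sylow p-subgroup of M (equivalently, x ∈ O_p(M)). Then either x belongs to some normal p-subgroup of G (i.e. x ∈ O_p(G)), or there is exactly one maximal subgroup of G containing x. -/
/-!
Suppose some maximal subgroup `M` contains every conjugate of `x`. By hypothesis these conjugates
lie in a `p`-subgroup of `M`, so the normal closure of `x` is a `p`-group. Otherwise, following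
Wielandt, let `X` be the conjugacy class of `x` and suppose that two distinct maximal subgroups
meet in an element of `X`. Choose such a pair `(L₁, L₂)` for which `D := X ∩ L₁ ∩ L₂` is as large as
possible. No maximal subgroup contains all of `X`, so `D` is not normalized by `G` and its
normalizer lies in a maximal subgroup `M`. Whenever `L` is a maximal subgroup containing `D` and
`L ≠ M`, the nilpotency of `⟨X ∩ L⟩` makes normalizers grow, so `X ∩ L ∩ M` is strictly larger
than `D`. By the choice of `D` this forces `L₁ = M = L₂`.
-/

open Subgroup

section Normalizer

variable {G : Type*} [Group G]

lemma normalizer_conjugatesOf (x : G) : normalizer (conjugatesOf x) = ⊤ :=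
  top_le_iff.1 <| le_set_normalizer_iff.2 fun g _ _ hy =>
    IsConj.trans hy (isConj_iff.2 ⟨g, rfl⟩)

lemma conjugatesOf_subset_of_normalizer_eq_top {D : Set G} (hD : normalizer D = ⊤) {d : G}
    (hd : d ∈ D) : conjugatesOf d ⊆ D := by
  intro y hy
  obtain ⟨g, rfl⟩ := isConj_iff.1 hy
  exact le_set_normalizer_iff.1 hD.ge g (mem_top g) d hd

lemma le_normalizer_inter {S : Set G} {H : Subgroup G} (hS : H ≤ normalizer S) :
    H ≤ normalizer (S ∩ H) :=
  le_set_normalizer_iff.2 fun h hh g hg =>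
    ⟨le_set_normalizer_iff.1 hS h hh g hg.1, H.mul_mem (H.mul_mem hh hg.2) (H.inv_mem hh)⟩

lemma exists_mem_normalizer_notMem_of_ssubset {S D : Set G} [Group.IsNilpotent (closure S)]
    (hS : S ⊆ normalizer S) (hD : D ⊆ normalizer D) (hfin : D.Finite) (hDS : D ⊂ S) :
    ∃ y ∈ S, y ∉ D ∧ y ∈ normalizer D := by
  have : Finite D := hfin
  let K : Subgroup (closure S) := (normalizer D).subgroupOf (closure S)
  rcases eq_or_ne K ⊤ with hK | hK
  · obtain ⟨y, hyS, hyD⟩ := Set.exists_of_ssubset hDS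
    exact ⟨y, hyS, hyD, subgroupOf_eq_top.1 hK (subset_closure hyS)⟩
  · -- If `u` normalizes `K` but not `D`, it moves some `d ∈ D ⊆ K` out of `D` but not out of `K`.
    obtain ⟨u, huN, huK⟩ := SetLike.exists_of_lt
      (Group.normalizerCondition_of_isNilpotent K (lt_top_iff_ne_top.2 hK))
    obtain ⟨d, hd, hud⟩ : ∃ d ∈ D, (u : G) * d * (u : G)⁻¹ ∉ D := by
      by_contra! h
      exact huK (mem_subgroupOf.2 (mem_normalizer_fintype h))
    have hdK : (⟨d, subset_closure (hDS.1 hd)⟩ : closure S) ∈ K := mem_subgroupOf.2 (hD hd)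
    exact ⟨_, ((closure_le _).2 hS u.2 d).1 (hDS.1 hd), hud,
      mem_subgroupOf.1 ((huN _).1 hdK)⟩

end Normalizer

section MaximalSubgroups

variable {G : Type*} [Group G]

lemma ssubset_inter_inf_of_normalizer_le {S D : Set G} {L M : Subgroup G}
    (hS : L ≤ normalizer S) [Group.IsNilpotent (closure (S ∩ L))] (hL : IsCoatom L)
    (hM : M ≠ ⊤) (hLM : L ≠ M) (hfin : D.Finite) (hDL : D ⊆ S ∩ L)
    (hD : D ⊆ normalizer D) (hDM : normalizer D ≤ M) :
    D ⊂ S ∩ (L ⊓ M : Subgroup G) := by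
  have hsub : D ⊆ S ∩ (L ⊓ M : Subgroup G) := fun d hd =>
    ⟨(hDL hd).1, (hDL hd).2, hDM (hD hd)⟩
  have hLN : L ≤ normalizer (S ∩ L) := le_normalizer_inter hS
  have hDne : D ≠ S ∩ L := by
    rintro rfl
    exact hLM ((hL.le_iff_eq hM).1 (hLN.trans hDM)).symm
  obtain ⟨y, hyL, hyD, hyN⟩ := exists_mem_normalizer_notMem_of_ssubset
    (Set.inter_subset_right.trans hLN) hD hfin (hDL.ssubset_of_ne hDne)
  exact Set.ssubset_iff_exists.2 ⟨hsub, y, ⟨hyL.1, hyL.2, hDM hyN⟩, hyD⟩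

theorem eq_of_isCoatom_of_mem [IsCoatomic (Subgroup G)] {x : G}
    (hfin : (conjugatesOf x).Finite)
    (hnil : ∀ M : Subgroup G, IsCoatom M → Group.IsNilpotent (closure (conjugatesOf x ∩ M)))
    (hx : ∀ M : Subgroup G, IsCoatom M → ¬ conjugatesOf x ⊆ M) {M₁ M₂ : Subgroup G}
    (h₁ : IsCoatom M₁) (h₂ : IsCoatom M₂) (hx₁ : x ∈ M₁) (hx₂ : x ∈ M₂) : M₁ = M₂ := by
  let X := conjugatesOf x
  let meet (L : Subgroup G × Subgroup G) : Set G := X ∩ (L.1 ⊓ L.2 : Subgroup G)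
  let badPairs : Set (Subgroup G × Subgroup G) :=
    {L | IsCoatom L.1 ∧ IsCoatom L.2 ∧ L.1 ≠ L.2 ∧ (meet L).Nonempty}
  by_contra hne
  have hbad : badPairs.Nonempty :=
    ⟨(M₁, M₂), h₁, h₂, hne, x, mem_conjugatesOf_self, hx₁, hx₂⟩
  have hmeet : (meet '' badPairs).Finite :=
    hfin.finite_subsets.subset (Set.image_subset_iff.2 fun _ _ => Set.inter_subset_left)
  obtain ⟨⟨L₁, L₂⟩, ⟨hL₁, hL₂, hL₁₂, d, hd⟩, hmax⟩ :=
    Set.Finite.exists_maximalFor' meet badPairs hmeet hbad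
  set D := meet (L₁, L₂)
  have hXtop : ∀ L : Subgroup G, L ≤ normalizer X := fun _ => normalizer_conjugatesOf x ▸ le_top
  have hD : D ⊆ normalizer D := Set.inter_subset_right.trans (le_normalizer_inter (hXtop _))
  have hDtop : normalizer D ≠ ⊤ := by
    intro htop
    have hXD : X ⊆ D := (IsConj.conjugatesOf_eq hd.1).subset.trans
      (conjugatesOf_subset_of_normalizer_eq_top htop hd)
    exact hx L₁ hL₁ fun y hy => (hXD hy).2.1
  obtain ⟨M, hM, hDM⟩ := (eq_top_or_exists_le_coatom (normalizer D)).resolve_left hDtop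
  have eq_M : ∀ L : Subgroup G, IsCoatom L → D ⊆ X ∩ L → L = M := by
    intro L hL hDL
    by_contra hLM
    have := hnil L hL
    have hlt : D ⊂ meet (L, M) := ssubset_inter_inf_of_normalizer_le (hXtop L) hL hM.1 hLM
      (hfin.subset Set.inter_subset_left) hDL hD hDM
    exact hlt.not_subset (hmax ⟨hL, hM, hLM, d, hlt.subset hd⟩ hlt.subset)
  exact hL₁₂ ((eq_M L₁ hL₁ fun y hy => ⟨hy.1, hy.2.1⟩).trans
    (eq_M L₂ hL₂ fun y hy => ⟨hy.1, hy.2.2⟩).symm)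

end MaximalSubgroups

section Sylow

variable {G : Type*} [Group G] {p : ℕ} {x : G}

lemma mem_sylow_of_isConj
    (hcore : ∀ M : Subgroup G, IsCoatom M → ∀ hxM : x ∈ M,
      ∀ Q : Sylow p M, (⟨x, hxM⟩ : M) ∈ (Q : Subgroup M))
    {M : Subgroup G} (hM : IsCoatom M) {y : G} (hxy : IsConj x y) (hyM : y ∈ M)
    (Q : Sylow p M) : (⟨y, hyM⟩ : M) ∈ (Q : Subgroup M) := by
  obtain ⟨c, rfl⟩ := isConj_iff.1 hxy
  let e : G ≃* G := MulAut.conj c⁻¹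
  have hex : e (c * x * c⁻¹) = x := by simp [e, mul_assoc]
  have hcoatom : IsCoatom (M.map (e : G →* G)) := (e.mapSubgroup.isCoatom_iff M).2 hM
  let f : M ≃* M.map (e : G →* G) := e.subgroupMap M
  have hfx : f.symm ⟨x, _, hyM, hex⟩ = ⟨c * x * c⁻¹, hyM⟩ :=
    f.symm_apply_eq.2 (Subtype.ext hex.symm)
  have hmem := hcore _ hcoatom ⟨_, hyM, hex⟩ (Q.comapOfInjective (f.symm : _ →* M)
    f.symm.injective (le_top.trans_eq (MonoidHom.range_eq_top.2 f.symm.surjective).symm))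
  exact hfx ▸ hmem

lemma isPGroup_closure_conjugatesOf_inter
    (hcore : ∀ M : Subgroup G, IsCoatom M → ∀ hxM : x ∈ M,
      ∀ Q : Sylow p M, (⟨x, hxM⟩ : M) ∈ (Q : Subgroup M))
    {M : Subgroup G} (hM : IsCoatom M) : IsPGroup p (closure (conjugatesOf x ∩ M)) := by
  obtain ⟨Q⟩ : Nonempty (Sylow p M) := inferInstance
  refine (Q.2.map M.subtype).to_le ((closure_le _).2 ?_)
  exact fun y hy => ⟨⟨y, hy.2⟩, mem_sylow_of_isConj hcore hM hy.1 hy.2 Q, rfl⟩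

end Sylow

/-- **Wielandt's criterion applied to a `p`-element.**
Let `x` be a nontrivial `p`-element of a finite group `G` such that for every maximal
subgroup `M` containing `x`, the element `x` lies in every Sylow `p`-subgroup of `M`
(i.e. `x ∈ O_p(M)`). Then either `x` lies in some normal `p`-subgroup of `G`
(i.e. `x ∈ O_p(G)`), or there is exactly one maximal subgroup of `G` containing `x`. -/
theorem statement_16 {G : Type*} [Group G] [Fintype G] (p : ℕ) [Fact p.Prime]
    (x : G) (hx1 : x ≠ 1) (hpelt : ∃ n : ℕ, orderOf x = p ^ n)
    (hcore : ∀ M : Subgroup G, IsCoatom M → ∀ hxM : x ∈ M,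
      ∀ Q : Sylow p ↥M, (⟨x, hxM⟩ : ↥M) ∈ (Q : Subgroup ↥M)) :
    (∃ N : Subgroup G, N.Normal ∧ IsPGroup p ↥N ∧ x ∈ N) ∨
      (∃! M : Subgroup G, IsCoatom M ∧ x ∈ M) := by
  have hpX (M : Subgroup G) (hM : IsCoatom M) : IsPGroup p (closure (conjugatesOf x ∩ M)) :=
    isPGroup_closure_conjugatesOf_inter hcore hM
  by_cases hX : ∃ M : Subgroup G, IsCoatom M ∧ conjugatesOf x ⊆ M
  · obtain ⟨M, hM, hXM⟩ := hX
    have hclosure : normalClosure {x} = closure (conjugatesOf x ∩ M) := by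
      rw [Set.inter_eq_left.2 hXM, normalClosure, Group.conjugatesOfSet, Set.biUnion_singleton]
    exact Or.inl ⟨normalClosure {x}, inferInstance, hclosure ▸ hpX M hM,
      subset_normalClosure rfl⟩
  · push Not at hX
    rcases eq_top_or_exists_le_coatom (zpowers x) with htop | ⟨M, hM, hxM⟩
    · obtain ⟨n, hn⟩ := hpelt
      have hp : IsPGroup p (zpowers x) := IsPGroup.of_card ((Nat.card_zpowers x).trans hn)
      exact Or.inl ⟨zpowers x, htop ▸ inferInstance, hp, mem_zpowers x⟩
    · exact Or.inr ⟨M, ⟨hM, hxM (mem_zpowers x)⟩, fun L hL =>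
        eq_of_isCoatom_of_mem (Set.toFinite _) (fun K hK => (hpX K hK).isNilpotent)
          hX hL.1 hM hL.2 (hxM (mem_zpowers x))⟩
end
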